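/- arXiv:2101.01458 — 2 statements merged into one kernel-verified Lean document; each statement's English description precedes it below -/
import Mathlib

section
/- For any $0 < \epsilon < 1$ and any positive integer $n$, $\mathrm{Widim}_\epsilon([0,1]^n, d_{l^\infty}) = n$; that is, there is an $\epsilon$-embedding of $([0,1]^n, d_{l^\infty})$ into some polyhedron of dimension $n$, but no $\epsilon$-embedding of $([0,1]^n, d_{l^\infty})$ into any polyhedron of dimension strictly less than $n$. -/
open Set Filter Topology
open scoped ENNReal NNReal symmDiff

/-- Right translate `S·c = {s * c : s ∈ S}` of a subset of a group. -/
def rightTranslate {G : Type*} [Group G] (S : Set G) (c : G) : Set G := (fun s => s * c) '' S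

/-- The boundary set `B(F,T) = {g ∈ G : Tg ∩ F ≠ ∅ and Tg ∩ (G \ F) ≠ ∅}`. -/
def Bset {G : Type*} [Group G] (F T : Set G) : Set G :=
  {g : G | (rightTranslate T g ∩ F).Nonempty ∧ (rightTranslate T g ∩ Fᶜ).Nonempty}

/-- `F` is `(T,ε)`-invariant: `|B(F,T)| < ε * |F|`. -/
def IsInvariantSet {G : Type*} [Group G] (F T : Set G) (ε : ℝ) : Prop :=
  ((Bset F T).ncard : ℝ) < ε * (F.ncard : ℝ)

/-- A Følner sequence of nonempty finite subsets of `G`. -/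
def IsFolnerSeq {G : Type*} [Group G] (F : ℕ → Set G) : Prop :=
  (∀ n, (F n).Finite ∧ (F n).Nonempty) ∧
    ∀ g : G, Tendsto
      (fun n => ((symmDiff (F n) ((fun x => g * x) '' (F n))).ncard : ℝ) / ((F n).ncard : ℝ))
      atTop (nhds 0)

/-- A countable discrete group is amenable if it admits a Følner sequence. -/
def AmenableGroup (G : Type*) [Group G] : Prop := ∃ F : ℕ → Set G, IsFolnerSeq F

/-- A tiling of `G`: pairwise disjoint nonempty finite subsets covering `G`. -/
def IsTilingOf {G : Type*} [Group G] (𝒯 : Set (Set G)) : Prop :=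
  (∀ T ∈ 𝒯, T.Finite ∧ T.Nonempty) ∧
    (∀ T ∈ 𝒯, ∀ T' ∈ 𝒯, T ≠ T' → Disjoint T T') ∧ ⋃₀ 𝒯 = Set.univ

/-- `𝒮` is a (finite) set of shapes for the tiling `𝒯`. -/
def IsShapeSet {G : Type*} [Group G] (𝒯 𝒮 : Set (Set G)) : Prop :=
  𝒮.Finite ∧ (∀ S ∈ 𝒮, S.Finite ∧ S.Nonempty) ∧
    ∀ T ∈ 𝒯, ∃ S ∈ 𝒮, ∃ c : G, T = rightTranslate S c

/-- The center of a shape `S` relative to a tiling `𝒯`. -/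
def center {G : Type*} [Group G] (𝒯 : Set (Set G)) (S : Set G) : Set G :=
  {c : G | rightTranslate S c ∈ 𝒯}

/-- A syndetic subset: `G = F·A` for some finite `F`. -/
def SyndeticSet {G : Type*} [Group G] (A : Set G) : Prop :=
  ∃ F : Set G, F.Finite ∧ Set.image2 (· * ·) F A = Set.univ

/-- The translation `𝒯g = {Tg : T ∈ 𝒯}` of a tiling. -/
def tilingTranslate {G : Type*} [Group G] (𝒯 : Set (Set G)) (g : G) : Set (Set G) :=
  (fun T => rightTranslate T g) '' 𝒯

/-- The restriction `𝒯|_F = {T ∩ F : T ∈ 𝒯}`. -/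
def tilingRestrict {G : Type*} [Group G] (𝒯 : Set (Set G)) (F : Set G) : Set (Set G) :=
  (fun T => T ∩ F) '' 𝒯

/-- The full `G`-shift: `(σ_g x)_h = x_{hg}`. -/
def shift {G K : Type*} [Group G] (g : G) (x : G → K) : G → K := fun h => x (h * g)

/-- A subshift: a closed shift-invariant subset of `K^G`. -/
def IsSubshift {G : Type*} (K : Type*) [Group G] [TopologicalSpace K]
    (X : Set (G → K)) : Prop :=
  IsClosed X ∧ ∀ g : G, ∀ x ∈ X, shift g x ∈ X

/-- A weight `α : G → (0,∞)` with `α e = 1` and `∑ α < ∞`, defining the product metric. -/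
def IsGoodWeight {G : Type*} [Group G] (α : G → ℝ) : Prop :=
  α 1 = 1 ∧ (∀ g, 0 < α g) ∧ Summable α

/-- The metric `ρ(x,y) = ∑_g α_g d(x_g, y_g)` on `K^G`. -/
noncomputable def rhoMetric {G K : Type*} [Group G] [PseudoMetricSpace K] (α : G → ℝ)
    (x y : G → K) : ℝ :=
  ∑' g : G, α g * dist (x g) (y g)

/-- `ρ_F(x,y) = max_{g ∈ F} ρ(gx, gy)` for finite `F ⊆ G`. -/
noncomputable def rhoMetricF {G K : Type*} [Group G] [PseudoMetricSpace K] (α : G → ℝ)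
    (F : Set G) (x y : G → K) : ℝ :=
  sSup ((fun g => rhoMetric α (shift g x) (shift g y)) '' F)

/-- `d_F(x,y) = max_{g∈F} d(gx, gy)` for an action `φ`. -/
noncomputable def dynDist {G X : Type*} [Group G] [PseudoMetricSpace X]
    (φ : G → X → X) (F : Set G) (x y : X) : ℝ :=
  sSup ((fun g => dist (φ g x) (φ g y)) '' F)

/-- An `ε`-embedding w.r.t. `ρ`: continuous, and `f x = f y → ρ x y < ε`. -/
def IsEpsEmb {X Y : Type*} [TopologicalSpace X] [TopologicalSpace Y]
    (ρ : X → X → ℝ) (ε : ℝ) (f : X → Y) : Prop :=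
  Continuous f ∧ ∀ x y, f x = f y → ρ x y < ε

/-- `Widim_ε(X,ρ) ≤ n`: there is an `ε`-embedding of `X` into (the geometric realization of)
a finite simplicial complex all of whose faces have at most `n+1` vertices. -/
def WidimLE (X : Type*) [TopologicalSpace X] (ρ : X → X → ℝ) (ε : ℝ) (n : ℕ) : Prop :=
  ∃ (N : ℕ) (P : Geometry.SimplicialComplex ℝ (Fin N → ℝ)),
    P.faces.Finite ∧ (∀ s ∈ P.faces, s.card ≤ n + 1) ∧
      ∃ f : X → P.space, IsEpsEmb ρ ε f

/-- `Widim_ε(X,ρ)`: the minimum dimension of a polyhedron admitting an `ε`-embedding of `X`. -/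
noncomputable def widim (X : Type*) [TopologicalSpace X] (ρ : X → X → ℝ) (ε : ℝ) : ℕ∞ :=
  sInf {n : ℕ∞ | ∃ m : ℕ, n = (m : ℕ∞) ∧ WidimLE X ρ ε m}

/-- Covering dimension `≤ n`: every open cover admits an open refinement of multiplicity `≤ n+1`. -/
def DimLE (X : Type*) [TopologicalSpace X] (n : ℕ) : Prop :=
  ∀ 𝒰 : Set (Set X), (∀ U ∈ 𝒰, IsOpen U) → ⋃₀ 𝒰 = Set.univ →
    ∃ 𝒱 : Set (Set X), (∀ V ∈ 𝒱, IsOpen V) ∧ ⋃₀ 𝒱 = Set.univ ∧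
      (∀ V ∈ 𝒱, ∃ U ∈ 𝒰, V ⊆ U) ∧
      ∀ x : X, ({V ∈ 𝒱 | x ∈ V}).Finite ∧ ({V ∈ 𝒱 | x ∈ V}).ncard ≤ n + 1

/-- Topological (covering) dimension, valued in `ℕ∞`. -/
noncomputable def covDim (X : Type*) [TopologicalSpace X] : ℕ∞ :=
  sInf {n : ℕ∞ | ∃ m : ℕ, n = (m : ℕ∞) ∧ DimLE X m}

/-- Mean dimension of the action `φ` computed along the Følner sequence `F`
(as `sup_{ε>0} limsup_n Widim_ε(X, d_{F_n}) / |F_n|`). -/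
noncomputable def mdimAlong {G X : Type*} [Group G] [PseudoMetricSpace X]
    (φ : G → X → X) (F : ℕ → Set G) : ℝ≥0∞ :=
  ⨆ ε : {ε : ℝ // 0 < ε}, Filter.limsup
    (fun n => ((widim X (dynDist φ (F n)) ε.1 : ℕ∞) : ℝ≥0∞) / ((F n).ncard : ℝ≥0∞)) atTop

/-- Mean dimension of a subshift `X ⊆ K^G` computed along the Følner sequence `F`,
with the metric `ρ` induced by the weight `α`. -/
noncomputable def mdimSubshift {G K : Type*} [Group G] [PseudoMetricSpace K] (α : G → ℝ)
    (X : Set (G → K)) (F : ℕ → Set G) : ℝ≥0∞ :=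
  ⨆ ε : {ε : ℝ // 0 < ε}, Filter.limsup
    (fun n => ((widim X (fun x y : X => rhoMetricF α (F n) x.1 y.1) ε.1 : ℕ∞) : ℝ≥0∞) /
      ((F n).ncard : ℝ≥0∞)) atTop

/-- The canonical projection `π_F : K^G → K^F`. -/
def projTo {G K : Type*} (F : Set G) (x : G → K) : F → K := fun g => x g.1

/-- The tripod (cone over three points), realized as the subset of `ℝ³` of points with at most
one nonzero coordinate, each coordinate lying in `[0,1]`; the ℓ¹-distance on this set is exactly
the graph distance in which each of the three edges has length one. -/
def TripodSet : Set (Fin 3 → ℝ) :=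
  {x | (∀ i, x i ∈ Set.Icc (0 : ℝ) 1) ∧ ∀ i j : Fin 3, i ≠ j → x i = 0 ∨ x j = 0}

/-- The graph distance on the tripod (= the ℓ¹-distance of the ambient `ℝ³`). -/
noncomputable def tripodDist (x y : TripodSet) : ℝ := ∑ i, |x.1 i - y.1 i|

/-- The `l^∞`-distance on `P^n` for the tripod `P`. -/
noncomputable def tripodDistInf {n : ℕ} (x y : Fin n → TripodSet) : ℝ :=
  sSup (Set.range fun i => tripodDist (x i) (y i))

open MeasureTheory in
theorem det_interp {E : Type*} [NormedAddCommGroup E] [NormedSpace ℝ E] [FiniteDimensional ℝ E]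
    (t : Fin (Module.finrank ℝ E + 1) → ℝ) (ht : Function.Injective t) :
    ∃ w : Fin (Module.finrank ℝ E + 1) → ℝ, ∑ j, w j = 1 ∧
      ∀ A : E →L[ℝ] E, (1 + A).det = ∑ j, w j * (1 + t j • A).det := by
  classical
  refine ⟨fun j => (Lagrange.basis Finset.univ t j).eval 1, ?_, ?_⟩
  · rw [← Polynomial.eval_finsetSum, Lagrange.sum_basis ht.injOn Finset.univ_nonempty]
    simp
  · intro A
    let b := Module.finBasis ℝ E
    let M := LinearMap.toMatrix b b A.toLinearMap
    let p : Polynomial ℝ := ((Polynomial.X : Polynomial ℝ) • M.map Polynomial.C +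
      (1 : Matrix _ _ ℝ).map Polynomial.C).det
    have hp : ∀ s : ℝ, p.eval s = (1 + s • A).det := by
      intro s
      have h1 : (1 + s • A).det = LinearMap.det ((1 + s • A : E →L[ℝ] E).toLinearMap) := rfl
      rw [h1, ← LinearMap.det_toMatrix b]
      have h2 : ((1 + s • A : E →L[ℝ] E).toLinearMap) = LinearMap.id + s • A.toLinearMap := rfl
      rw [h2, map_add, map_smul, LinearMap.toMatrix_id]
      simp only [p]
      rw [← Polynomial.coe_evalRingHom, RingHom.map_det]
      congr 1
      ext i j
      by_cases hij : i = j
      · subst hij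
        simp [M, add_comm]
        ring
      · simp [M, hij]
        ring
    have hd : p.degree < (Finset.univ : Finset (Fin (Module.finrank ℝ E + 1))).card := by
      have := Polynomial.natDegree_det_X_add_C_le M 1
      refine lt_of_le_of_lt Polynomial.degree_le_natDegree ?_
      simp only [Finset.card_univ, Fintype.card_fin] at *
      exact_mod_cast Nat.lt_succ_of_le this
    have h := congrArg (Polynomial.eval 1) (Lagrange.eq_interpolate ht.injOn hd)
    rw [Lagrange.interpolate_apply, Polynomial.eval_finsetSum] at h
    simp only [Polynomial.eval_mul, Polynomial.eval_C, hp] at h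
    rw [one_smul] at h
    rw [h]
    exact Finset.sum_congr rfl fun _ _ => mul_comm _ _

theorem det_one_add_pos {E : Type*} [NormedAddCommGroup E] [NormedSpace ℝ E]
    [FiniteDimensional ℝ E] (A : E →L[ℝ] E) (hA : ‖A‖ < 1) : 0 < (1 + A).det := by
  have hne : ∀ s ∈ Icc (0:ℝ) 1, (1 + s • A).det ≠ 0 := by
    intro s hs h
    have h1 : LinearMap.det ((1 + s • A : E →L[ℝ] E).toLinearMap) = 0 := h
    obtain ⟨v, hv, hv0⟩ := Submodule.exists_mem_ne_zero_of_ne_bot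
      ((LinearMap.bot_lt_ker_of_det_eq_zero h1).ne')
    have h2 : v + s • A v = 0 := hv
    have h3 : v = - (s • A v) := eq_neg_of_add_eq_zero_left h2
    have h4 : ‖v‖ ≤ ‖A‖ * ‖v‖ := by
      calc ‖v‖ = ‖s • A v‖ := by conv_lhs => rw [h3, norm_neg]
        _ = s * ‖A v‖ := by rw [norm_smul, Real.norm_of_nonneg hs.1]
        _ ≤ 1 * ‖A v‖ := by gcongr; exact hs.2
        _ ≤ ‖A‖ * ‖v‖ := by rw [one_mul]; exact A.le_opNorm v
    have : 0 < ‖v‖ := norm_pos_iff.2 hv0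
    nlinarith
  have hc : ContinuousOn (fun s : ℝ => (1 + s • A).det) (Icc 0 1) := by
    apply Continuous.continuousOn
    exact ContinuousLinearMap.continuous_det.comp (by fun_prop)
  by_contra hneg
  push Not at hneg
  have := intermediate_value_Icc' zero_le_one hc
  have h0 : (0:ℝ) ∈ Icc ((1 + (1:ℝ) • A).det) ((1 + (0:ℝ) • A).det) := by
    constructor
    · simpa using hneg
    · rw [zero_smul, add_zero]
      have : (1 : E →L[ℝ] E).det = 1 := LinearMap.det_id
      rw [this]; exact zero_le_one
  obtain ⟨s, hs, hs0⟩ := this h0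
  exact hne s hs hs0

open MeasureTheory in
theorem no_retraction {E : Type*} [NormedAddCommGroup E] [InnerProductSpace ℝ E]
    [FiniteDimensional ℝ E] [MeasurableSpace E] [BorelSpace E] (r : E → E)
    (hr : ∀ x ∈ Metric.closedBall (0:E) 1, ContDiffAt ℝ 1 r x)
    (hn : ∀ x ∈ Metric.closedBall (0:E) 1, ‖r x‖ = 1)
    (hid : ∀ x : E, ‖x‖ = 1 → r x = x) : False := by
  classical
  set B := Metric.closedBall (0:E) 1 with hB
  have hBmem : ∀ x, x ∈ B ↔ ‖x‖ ≤ 1 := fun x => by simp [hB]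
  -- the displacement, extended by zero
  have hcd : ContDiffOn ℝ 1 (fun x => r x - x) B :=
    fun x hx => ((hr x hx).sub contDiffAt_id).contDiffWithinAt
  obtain ⟨K, hK⟩ := hcd.exists_lipschitzOnWith one_ne_zero (convex_closedBall _ _)
    (isCompact_closedBall _ _)
  let g : E → E := fun x => if x ∈ B then r x - x else 0
  have hgB : ∀ x ∈ B, g x = r x - x := fun x hx => if_pos hx
  have hgo : ∀ x, 1 ≤ ‖x‖ → g x = 0 := by
    intro x hx
    by_cases h : x ∈ B
    · rw [hgB x h, hid x (le_antisymm ((hBmem x).1 h) hx), sub_self]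
    · exact if_neg h
  have hmix : ∀ x y, x ∈ B → y ∉ B → ‖g x - g y‖ ≤ K * ‖x - y‖ := by
    intro x y hx hy
    have hx' := (hBmem x).1 hx
    have hy' : 1 < ‖y‖ := by
      by_contra h
      exact hy ((hBmem y).2 (not_lt.1 h))
    have hcont : ContinuousOn (fun z : E => ‖z‖) (segment ℝ x y) := continuous_norm.continuousOn
    have hpre := (convex_segment (𝕜 := ℝ) x y).isPreconnected
    obtain ⟨z, hz, hz1⟩ := hpre.intermediate_value (left_mem_segment ℝ x y)
      (right_mem_segment ℝ x y) hcont ⟨hx', hy'.le⟩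
    have hz1 : ‖z‖ = 1 := hz1
    have hzB : z ∈ B := (hBmem z).2 hz1.le
    have h1 := hK.dist_le_mul x hx z hzB
    rw [dist_eq_norm, dist_eq_norm, ← hgB x hx, ← hgB z hzB, hgo z hz1.ge] at h1
    rw [hgo y hy'.le]
    refine h1.trans ?_
    gcongr
    rw [norm_sub_rev x z, norm_sub_rev x y]
    obtain ⟨a, b, ha, hb, hab, rfl⟩ := hz
    have : a • x + b • y - x = b • (y - x) := by
      rw [← eq_sub_iff_add_eq] at hab; subst hab; module
    rw [this, norm_smul, Real.norm_of_nonneg hb]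
    exact mul_le_of_le_one_left (norm_nonneg _) (by linarith)
  have hgl : ∀ x y, ‖g x - g y‖ ≤ K * ‖x - y‖ := by
    intro x y
    by_cases hx : x ∈ B <;> by_cases hy : y ∈ B
    · have := hK.dist_le_mul x hx y hy
      rwa [dist_eq_norm, dist_eq_norm, ← hgB x hx, ← hgB y hy] at this
    · exact hmix x y hx hy
    · rw [norm_sub_rev, norm_sub_rev x y]; exact hmix y x hy hx
    · have : g x - g y = 0 := by simp [g, hx, hy]
      rw [this, norm_zero]; positivity
  -- derivative on the open ball
  set U := Metric.ball (0:E) 1 with hU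
  have hUmem : ∀ x, x ∈ U ↔ ‖x‖ < 1 := fun x => by simp [hU]
  have hUB : U ⊆ B := Metric.ball_subset_closedBall
  let D : E → E →L[ℝ] E := fun x => fderiv ℝ r x - 1
  have hgd : ∀ x ∈ U, HasFDerivAt g (D x) x := by
    intro x hx
    have h1 : HasFDerivAt (fun x => r x - x) (D x) x :=
      (((hr x (hUB hx)).differentiableAt one_ne_zero).hasFDerivAt).sub (hasFDerivAt_id x)
    refine h1.congr_of_eventuallyEq ?_
    filter_upwards [Metric.isOpen_ball.mem_nhds hx] with y hy
    exact hgB y (hUB hy)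
  have hDK : ∀ x ∈ U, ‖D x‖ ≤ K := by
    intro x hx
    have hL : LipschitzWith K g := LipschitzWith.of_dist_le_mul fun x y => by
      rw [dist_eq_norm, dist_eq_norm]; exact hgl x y
    exact (hgd x hx).le_of_lipschitz hL
  -- small times
  have hsmall : ∀ t : ℝ, 0 ≤ t → t * K < 1 →
      IntegrableOn (fun x => (1 + t • D x).det) U ∧
      ∫ x in U, (1 + t • D x).det = (volume U).toReal := by
    intro t ht0 ht
    let F : E → E := fun x => x + t • g x
    have hFd : ∀ x ∈ U, HasFDerivWithinAt F (1 + t • D x) U x := fun x hx =>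
      ((hasFDerivAt_id x).add ((hgd x hx).const_smul t)).hasFDerivWithinAt
    have happ : ApproximatesLinearOn F ((ContinuousLinearEquiv.refl ℝ E : E ≃L[ℝ] E) : E →L[ℝ] E)
        univ (t.toNNReal * K) := by
      intro x _ y _
      have : F x - F y - (x - y) = t • (g x - g y) := by simp only [F]; module
      simp only [ContinuousLinearEquiv.coe_refl, ContinuousLinearMap.id_apply]
      rw [this, norm_smul, Real.norm_of_nonneg ht0]
      rw [NNReal.coe_mul, Real.coe_toNNReal t ht0, mul_assoc]
      gcongr
      exact hgl x y
    have hc : Subsingleton E ∨ (t.toNNReal * K) <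
        ‖((ContinuousLinearEquiv.refl ℝ E).symm : E →L[ℝ] E)‖₊⁻¹ := by
      rcases subsingleton_or_nontrivial E with h | h
      · exact Or.inl h
      · right
        have : ‖((ContinuousLinearEquiv.refl ℝ E).symm : E →L[ℝ] E)‖₊ = 1 := by
          ext; exact ContinuousLinearMap.norm_id
        rw [this, inv_one]
        rw [← NNReal.coe_lt_coe, NNReal.coe_mul, Real.coe_toNNReal t ht0]
        exact ht
    have hinj : Function.Injective F := injOn_univ.1 (happ.injOn hc)
    have hsurj : Function.Surjective F := happ.surjective hc
    have hFo : ∀ x, 1 ≤ ‖x‖ → F x = x := fun x hx => by simp [F, hgo x hx]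
    have himg : F '' U = U := by
      have hnot : ∀ x, x ∉ U → 1 ≤ ‖x‖ := fun x hx => not_lt.1 fun h => hx ((hUmem x).2 h)
      ext y
      constructor
      · rintro ⟨x, hx, rfl⟩
        by_contra h
        have := hinj (hFo _ (hnot _ h))
        rw [this] at h
        exact h hx
      · intro hy
        obtain ⟨x, rfl⟩ := hsurj y
        by_cases h : x ∈ U
        · exact ⟨x, h, rfl⟩
        · rw [hFo x (hnot x h)] at hy
          exact absurd hy h
    have hInj : InjOn F U := hinj.injOn
    have habs : ∀ x ∈ U, |(1 + t • D x).det| • (1:ℝ) = (1 + t • D x).det := by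
      intro x hx
      rw [smul_eq_mul, mul_one, abs_of_pos]
      apply det_one_add_pos
      rw [norm_smul, Real.norm_of_nonneg ht0]
      exact lt_of_le_of_lt (by gcongr; exact hDK x hx) ht
    constructor
    · have := (integrableOn_image_iff_integrableOn_abs_det_fderiv_smul volume
        Metric.isOpen_ball.measurableSet hFd hInj (fun _ => (1:ℝ)))
      rw [himg] at this
      have h2 := this.1 (by
        apply integrableOn_const
        · exact measure_ball_lt_top.ne
        · simp)
      exact h2.congr_fun habs Metric.isOpen_ball.measurableSet
    · have := (integral_image_eq_integral_abs_det_fderiv_smul volume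
        Metric.isOpen_ball.measurableSet hFd hInj (fun _ => (1:ℝ)))
      rw [himg, setIntegral_congr_fun Metric.isOpen_ball.measurableSet habs] at this
      rw [← this]; simp [Measure.real]
  -- interpolation
  have hK0 : (0:ℝ) ≤ K := K.2
  let t : Fin (Module.finrank ℝ E + 1) → ℝ := fun j => ((j : ℕ) + 1 : ℝ)⁻¹ * (K + 1 : ℝ)⁻¹
  have ht0 : ∀ j, 0 ≤ t j := fun j => by positivity
  have ht1 : ∀ j, t j * K < 1 := by
    intro j
    have h1 : ((j : ℕ) + 1 : ℝ)⁻¹ ≤ 1 := inv_le_one_of_one_le₀ (by simp)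
    have h2 : (K + 1 : ℝ)⁻¹ * K < 1 := by
      rw [inv_mul_lt_iff₀ (by positivity)]; linarith
    have h3 : 0 ≤ (K + 1 : ℝ)⁻¹ * K := by positivity
    calc t j * K = ((j : ℕ) + 1 : ℝ)⁻¹ * ((K + 1 : ℝ)⁻¹ * K) := by simp only [t]; ring
      _ ≤ 1 * ((K + 1 : ℝ)⁻¹ * K) := by gcongr
      _ < 1 := by linarith
  have htinj : Function.Injective t := by
    intro i j hij
    have hne : (K + 1 : ℝ)⁻¹ ≠ 0 := by positivity
    have h1 := inv_injective (mul_right_cancel₀ hne hij)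
    have h2 : (i : ℕ) = (j : ℕ) := by exact_mod_cast add_right_cancel h1
    exact Fin.ext h2
  obtain ⟨w, hw1, hw⟩ := det_interp (E := E) t htinj
  have hzero : ∀ x ∈ U, (1 + D x).det = 0 := by
    intro x hx
    have h1 : (1 + D x) = fderiv ℝ r x := by simp [D]
    rw [h1]
    by_contra hdet
    have hdiff : HasFDerivAt r (fderiv ℝ r x) x :=
      ((hr x (hUB hx)).differentiableAt one_ne_zero).hasFDerivAt
    have h2 := hdiff.norm_sq
    have h3 : HasFDerivAt (fun y => ‖r y‖ ^ 2) (0 : E →L[ℝ] ℝ) x := by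
      refine (hasFDerivAt_const (1:ℝ) x).congr_of_eventuallyEq ?_
      filter_upwards [Metric.isOpen_ball.mem_nhds hx] with y hy
      rw [hn y (hUB hy)]; norm_num
    have h4 := h2.unique h3
    have hu : IsUnit (LinearMap.det ((fderiv ℝ r x) : E →ₗ[ℝ] E)) := isUnit_iff_ne_zero.2 hdet
    have hs : Function.Surjective (fderiv ℝ r x) :=
      (LinearEquiv.ofIsUnitDet (v := Module.finBasis ℝ E) (v' := Module.finBasis ℝ E)
        (f := ((fderiv ℝ r x) : E →ₗ[ℝ] E)) (by
          rwa [LinearMap.det_toMatrix])).surjective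
    obtain ⟨v, hv⟩ := hs (r x)
    have h5 := congrArg (fun L : E →L[ℝ] ℝ => L v) h4
    simp [hv, hn x (hUB hx)] at h5
  have hI : ∫ x in U, (1 + D x).det = (volume U).toReal := by
    have hfun : (fun x => (1 + D x).det) = fun x => ∑ j, w j * (1 + t j • D x).det :=
      funext fun x => hw (D x)
    rw [hfun]
    rw [integral_finsetSum]
    · simp_rw [integral_const_mul]
      rw [Finset.sum_congr rfl fun j _ => by rw [(hsmall (t j) (ht0 j) (ht1 j)).2],
        ← Finset.sum_mul, hw1, one_mul]
    · intro j _
      exact (hsmall (t j) (ht0 j) (ht1 j)).1.const_mul _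
  rw [setIntegral_congr_fun Metric.isOpen_ball.measurableSet hzero] at hI
  have hpos : 0 < (volume U).toReal :=
    ENNReal.toReal_pos (Metric.measure_ball_pos volume _ one_pos).ne' measure_ball_lt_top.ne
  simp at hI
  linarith

theorem brouwer_half {E : Type*} [NormedAddCommGroup E] [InnerProductSpace ℝ E]
    [FiniteDimensional ℝ E] [MeasurableSpace E] [BorelSpace E] (ψ : E → E)
    (hψ : Continuous ψ) (hb : ∀ x, ‖ψ x‖ ≤ 1 / 2) : ∃ x, ψ x = x := by
  by_contra hno
  push Not at hno
  obtain ⟨x₀, hx₀, hmin⟩ := (isCompact_closedBall (0:E) 1).exists_isMinOn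
    ⟨0, by simp⟩ (f := fun x => ‖ψ x - x‖) (by fun_prop)
  set δ := ‖ψ x₀ - x₀‖ with hδ
  have hδ0 : 0 < δ := norm_pos_iff.2 (sub_ne_zero.2 (hno x₀))
  have hmin' : ∀ x ∈ Metric.closedBall (0:E) 1, δ ≤ ‖ψ x - x‖ := fun x hx => hmin hx
  obtain ⟨p, hp, hpa, -⟩ := hψ.exists_contDiff_approx 1 (ε := fun _ => min δ (1/2))
    continuous_const (fun _ => by positivity)
  have hp1 : ∀ x, ‖p x‖ < 1 := by
    intro x
    have h1 := (hpa x).trans_le (min_le_right _ _)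
    rw [dist_eq_norm] at h1
    have h2 := norm_add_le (p x - ψ x) (ψ x)
    rw [sub_add_cancel] at h2
    linarith [hb x]
  have hpx : ∀ x ∈ Metric.closedBall (0:E) 1, x - p x ≠ 0 := by
    intro x hx h
    have h1 := (hpa x).trans_le (min_le_left _ _)
    rw [← sub_eq_zero.1 h, dist_eq_norm, norm_sub_rev] at h1
    linarith [hmin' x hx]
  let u : E → E := fun x => x - p x
  have hp' : ContDiff ℝ 1 p := by exact_mod_cast hp
  have hu : ContDiff ℝ 1 u := contDiff_id.sub hp'
  let d : E → ℝ := fun x => (inner ℝ x (u x)) ^ 2 + ‖u x‖ ^ 2 * (1 - ‖x‖ ^ 2)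
  have hd : ContDiff ℝ 1 d :=
    ((contDiff_id.inner ℝ hu).pow 2).add
      ((hu.norm_sq ℝ).mul (contDiff_const.sub (contDiff_norm_sq ℝ)))
  have hin : ∀ x : E, ‖x‖ = 1 → 0 < inner ℝ x (u x) := by
    intro x hx
    have h1 : inner ℝ x (u x) = 1 - inner ℝ x (p x) := by
      simp only [u]
      rw [inner_sub_right, real_inner_self_eq_norm_sq, hx]; norm_num
    have h2 := real_inner_le_norm x (p x)
    rw [hx, one_mul] at h2
    linarith [hp1 x]
  have hdpos : ∀ x ∈ Metric.closedBall (0:E) 1, 0 < d x := by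
    intro x hx
    have hx1 : ‖x‖ ≤ 1 := by simpa using hx
    rcases hx1.lt_or_eq with h | h
    · have h1 : 0 < ‖u x‖ := norm_pos_iff.2 (hpx x hx)
      have h2 : 0 < 1 - ‖x‖ ^ 2 := by nlinarith [norm_nonneg x]
      simp only [d]
      positivity
    · have := hin x h
      simp only [d]
      rw [h]
      norm_num
      positivity
  refine no_retraction (fun x => x + ((- inner ℝ x (u x) + √(d x)) / ‖u x‖ ^ 2) • u x) ?_ ?_ ?_
  · intro x hx
    have h1 : ‖u x‖ ^ 2 ≠ 0 := by
      have : 0 < ‖u x‖ := norm_pos_iff.2 (hpx x hx)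
      positivity
    have h2 : ContDiffAt ℝ 1 (fun x => inner ℝ x (u x)) x := (contDiff_id.inner ℝ hu).contDiffAt
    exact contDiffAt_id.add
      (((h2.neg.add (hd.contDiffAt.sqrt (hdpos x hx).ne')).div (hu.norm_sq ℝ).contDiffAt h1).smul
        hu.contDiffAt)
  · intro x hx
    have h1 : ‖u x‖ ≠ 0 := norm_ne_zero_iff.2 (hpx x hx)
    have hs := Real.sq_sqrt (hdpos x hx).le
    set s := √(d x)
    have h3 : ‖x + ((- inner ℝ x (u x) + s) / ‖u x‖ ^ 2) • u x‖ ^ 2 = 1 := by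
      rw [norm_add_sq_real, norm_smul, inner_smul_right, mul_pow, Real.norm_eq_abs, sq_abs]
      simp only [d] at hs
      field_simp
      linear_combination hs
    have h4 := norm_nonneg (x + ((- inner ℝ x (u x) + s) / ‖u x‖ ^ 2) • u x)
    nlinarith
  · intro x hx
    have h1 := hin x hx
    have h2 : √(d x) = inner ℝ x (u x) := by
      simp only [d]
      rw [hx]
      norm_num
      rw [Real.sqrt_sq h1.le]
    simp only [h2]
    simp

theorem brouwer_cube {n : ℕ} (ψ : (Fin n → Set.Icc (0:ℝ) 1) → (Fin n → Set.Icc (0:ℝ) 1))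
    (hψ : Continuous ψ) : ∃ x, ψ x = x := by
  let e : EuclideanSpace ℝ (Fin n) → (Fin n → Set.Icc (0:ℝ) 1) :=
    fun v i => Set.projIcc 0 1 zero_le_one (v i)
  let ι : (Fin n → Set.Icc (0:ℝ) 1) → EuclideanSpace ℝ (Fin n) :=
    fun x => WithLp.toLp 2 (fun i => (x i : ℝ))
  have he : Continuous e := by
    refine continuous_pi fun i => continuous_projIcc.comp ?_
    fun_prop
  have hι : Continuous ι := by
    refine (PiLp.continuous_toLp 2 _).comp ?_
    fun_prop
  have hei : ∀ x, e (ι x) = x := fun x => by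
    funext i
    exact Set.projIcc_val zero_le_one (x i)
  obtain ⟨C, hC⟩ := (isCompact_range hι).isBounded.exists_norm_le
  have hC' : ∀ x, ‖ι x‖ ≤ C := fun x => hC _ ⟨x, rfl⟩
  have hC0 : 0 ≤ C := (norm_nonneg _).trans (hC' (fun _ => 0))
  let c : ℝ := (2 * (C + 1))⁻¹
  have hc : 0 < c := by positivity
  obtain ⟨v, hv⟩ := brouwer_half (fun v => c • ι (ψ (e (c⁻¹ • v)))) (by fun_prop) (by
    intro v
    rw [norm_smul, Real.norm_of_nonneg hc.le]
    have := hC' (ψ (e (c⁻¹ • v)))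
    simp only [c]
    rw [inv_mul_le_iff₀ (by positivity)]
    linarith)
  refine ⟨e (c⁻¹ • v), ?_⟩
  have h1 : c⁻¹ • v = ι (ψ (e (c⁻¹ • v))) := by
    conv_lhs => rw [← hv]
    rw [smul_smul, inv_mul_cancel₀ hc.ne', one_smul]
  conv_rhs => rw [h1, hei]

theorem miranda {n : ℕ} (φ : (Fin n → Set.Icc (0:ℝ) 1) → (Fin n → ℝ)) (hφ : Continuous φ)
    (h0 : ∀ x i, x i = 0 → φ x i = 0) (h1 : ∀ x i, x i = 1 → φ x i = 1)
    (c : Fin n → ℝ) (hc : ∀ i, c i ∈ Set.Ioo (0:ℝ) 1) : ∃ x, φ x = c := by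
  obtain ⟨x, hx⟩ := brouwer_cube
    (fun x i => Set.projIcc (0:ℝ) 1 zero_le_one ((x i : ℝ) + c i - φ x i)) (by
      refine continuous_pi fun i => continuous_projIcc.comp ?_
      fun_prop)
  refine ⟨x, funext fun i => ?_⟩
  have hi := congrArg Subtype.val (congrFun hx i)
  simp only [Set.coe_projIcc] at hi
  have hci := hc i
  have hx0 := (x i).2.1
  have hx1 := (x i).2.2
  rcases eq_or_ne (x i) 0 with h | h
  · have := h0 x i h
    rw [this, h] at hi
    simp at hi
    rcases hi with hi | hi <;> linarith [hci.1]
  · rcases eq_or_ne (x i) 1 with h' | h'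
    · have := h1 x i h'
      rw [this, h'] at hi
      simp at hi
      grind
    · have a0 : (0:ℝ) < x i := lt_of_le_of_ne hx0 fun hh => h (Subtype.ext hh.symm)
      have a1 : (x i : ℝ) < 1 := lt_of_le_of_ne hx1 fun hh => h' (Subtype.ext hh)
      rcases max_choice 0 (min 1 ((x i : ℝ) + c i - φ x i)) with hm | hm
      · rw [hm] at hi; linarith
      · rw [hm] at hi
        rcases min_choice 1 ((x i : ℝ) + c i - φ x i) with hk | hk <;> rw [hk] at hi <;> linarith

theorem dimH_convexHull_le {N m : ℕ} (s : Finset (Fin N → ℝ)) (hs : s.Nonempty)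
    (hc : s.card ≤ m + 1) : dimH (convexHull ℝ (s : Set (Fin N → ℝ))) ≤ m := by
  classical
  obtain ⟨v, hv⟩ := hs
  let W := vectorSpan ℝ (s : Set (Fin N → ℝ))
  let T : W → (Fin N → ℝ) := fun w => (w : Fin N → ℝ) + v
  have hT : LipschitzWith 1 T := LipschitzWith.of_dist_le_mul fun x y => by
    simp [T, Subtype.dist_eq]
  have hsub : convexHull ℝ (s : Set (Fin N → ℝ)) ⊆ range T := by
    intro x hx
    have h1 := convexHull_subset_affineSpan _ hx
    have h2 : x -ᵥ v ∈ (affineSpan ℝ (s : Set (Fin N → ℝ))).direction :=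
      AffineSubspace.vsub_mem_direction h1 (subset_affineSpan ℝ _ hv)
    rw [direction_affineSpan] at h2
    exact ⟨⟨_, h2⟩, by simp [T]⟩
  have hfr : Module.finrank ℝ W ≤ m := by
    have hpos : 0 < s.card := Finset.card_pos.2 ⟨v, hv⟩
    have h := finrank_vectorSpan_image_finset_le ℝ (id : (Fin N → ℝ) → (Fin N → ℝ)) s
      (n := s.card - 1) (by omega)
    rw [Finset.image_id] at h
    have h' : Module.finrank ℝ W ≤ s.card - 1 := h
    omega
  calc dimH (convexHull ℝ (s : Set (Fin N → ℝ))) ≤ dimH (range T) := dimH_mono hsub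
    _ ≤ dimH (univ : Set W) := hT.dimH_range_le
    _ = Module.finrank ℝ W := Real.dimH_univ_eq_finrank W
    _ ≤ m := by exact_mod_cast hfr

theorem widim_cube_lower (ε : ℝ) (hε1 : ε < 1) (n m : ℕ) (hm : m < n) :
    ¬ WidimLE (Fin n → Set.Icc (0 : ℝ) 1) dist ε m := by
  rintro ⟨N, P, hfin, hcard, f, hf, hinj⟩
  let F : (Fin n → Set.Icc (0 : ℝ) 1) → (Fin N → ℝ) := fun x => (f x : Fin N → ℝ)
  have hF : Continuous F := continuous_subtype_val.comp hf
  let A : Fin n → Set (Fin N → ℝ) := fun i => F '' {x | x i = 0}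
  let B : Fin n → Set (Fin N → ℝ) := fun i => F '' {x | x i = 1}
  have hAc : ∀ i, IsCompact (A i) := fun i =>
    (isClosed_eq (continuous_apply i) continuous_const).isCompact.image hF
  have hBc : ∀ i, IsCompact (B i) := fun i =>
    (isClosed_eq (continuous_apply i) continuous_const).isCompact.image hF
  have hAn : ∀ i, (A i).Nonempty := fun i => ⟨_, fun _ => 0, rfl, rfl⟩
  have hBn : ∀ i, (B i).Nonempty := fun i => ⟨_, fun _ => 1, rfl, rfl⟩
  have hdisj : ∀ i, ∀ p ∈ B i, p ∉ A i := by
    rintro i _ ⟨y, hy, rfl⟩ ⟨x, hx, hxy⟩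
    have h1 := hinj x y (Subtype.ext hxy)
    have h2 := dist_le_pi_dist x y i
    have hx' : x i = 0 := hx
    have hy' : y i = 1 := hy
    rw [hx', hy', Subtype.dist_eq] at h2
    simp at h2
    linarith
  have hδ : ∀ i, ∃ δ : ℝ, 0 < δ ∧ ∀ p ∈ B i, δ ≤ Metric.infDist p (A i) := by
    intro i
    obtain ⟨p, hp, hmin⟩ := (hBc i).exists_isMinOn (hBn i)
      (f := fun p => Metric.infDist p (A i)) (Metric.continuous_infDist_pt _).continuousOn
    exact ⟨_, ((hAc i).isClosed.notMem_iff_infDist_pos (hAn i)).1 (hdisj i p hp),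
      fun q hq => hmin hq⟩
  choose δ hδ0 hδ using hδ
  let H : (Fin N → ℝ) → (Fin n → ℝ) := fun p i => min 1 ((δ i)⁻¹ * Metric.infDist p (A i))
  have hH : ∃ K, LipschitzWith K H := by
    refine ⟨∑ i, (δ i)⁻¹.toNNReal, LipschitzWith.of_dist_le_mul fun p q => ?_⟩
    rw [dist_pi_le_iff (by positivity)]
    intro i
    have h1 : dist (H p i) (H q i) ≤ (δ i)⁻¹ * dist p q := by
      have h2 := (Metric.lipschitz_infDist_pt (A i)).dist_le_mul p q
      simp only [NNReal.coe_one, one_mul, Real.dist_eq] at h2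
      have h3 := abs_min_sub_min_le_max 1 ((δ i)⁻¹ * Metric.infDist p (A i)) 1
        ((δ i)⁻¹ * Metric.infDist q (A i))
      rw [sub_self, abs_zero, max_eq_right (abs_nonneg _), ← mul_sub, abs_mul,
        abs_of_pos (inv_pos.2 (hδ0 i))] at h3
      rw [Real.dist_eq]
      refine h3.trans ?_
      have := (inv_pos.2 (hδ0 i)).le
      gcongr
    refine h1.trans ?_
    gcongr
    have h4 : (δ i)⁻¹.toNNReal ≤ ∑ i, (δ i)⁻¹.toNNReal :=
      Finset.single_le_sum (f := fun i => (δ i)⁻¹.toNNReal) (fun _ _ => zero_le)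
        (Finset.mem_univ i)
    calc (δ i)⁻¹ = ((δ i)⁻¹.toNNReal : ℝ) := (Real.coe_toNNReal _ (inv_pos.2 (hδ0 i)).le).symm
      _ ≤ _ := by exact_mod_cast h4
  obtain ⟨K, hK⟩ := hH
  have hdim : dimH (H '' P.space) ≤ m := by
    refine (hK.dimH_image_le _).trans ?_
    rw [Geometry.SimplicialComplex.space, dimH_bUnion hfin.countable]
    exact iSup₂_le fun s hs =>
      dimH_convexHull_le s (Geometry.SimplicialComplex.nonempty_of_mem_faces hs) (hcard s hs)
  have hdense : Dense (H '' P.space)ᶜ := by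
    apply dense_compl_of_dimH_lt_finrank
    refine hdim.trans_lt ?_
    simpa using hm
  have hopen : IsOpen (Set.pi univ fun _ : Fin n => Ioo (0:ℝ) 1) :=
    isOpen_set_pi finite_univ fun _ _ => isOpen_Ioo
  obtain ⟨c, hcI, hcn⟩ := hdense.inter_open_nonempty _ hopen
    ⟨fun _ => 1 / 2, fun i _ => by norm_num⟩
  obtain ⟨x, hx⟩ := miranda (fun x => H (F x)) (hK.continuous.comp hF)
    (by
      intro x i hx
      have : F x ∈ A i := ⟨x, hx, rfl⟩
      simp [H, Metric.infDist_zero_of_mem this])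
    (by
      intro x i hx
      have h1 := hδ i (F x) ⟨x, hx, rfl⟩
      simp only [H]
      apply min_eq_left
      rw [le_inv_mul_iff₀ (hδ0 i), mul_one]
      exact h1)
    c (fun i => hcI i (mem_univ i))
  exact hcn ⟨F x, (f x).2, hx⟩

theorem widim_cube_upper (ε : ℝ) (hε0 : 0 < ε) (n : ℕ) (hn : 0 < n) :
    WidimLE (Fin n → Set.Icc (0 : ℝ) 1) dist ε n := by
  classical
  let V : Finset (Fin (n + 1) → ℝ) := Finset.univ.image fun i => Pi.single i (1:ℝ)
  have hV : (V : Set (Fin (n + 1) → ℝ)) = range fun i => Pi.single i (1:ℝ) := by simp [V]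
  have hVi : AffineIndependent ℝ (Subtype.val : ((V : Set (Fin (n + 1) → ℝ)) : Type) → (Fin (n + 1) → ℝ)) := by
    rw [hV]
    have h := (Pi.basisFun ℝ (Fin (n + 1))).linearIndependent.affineIndependent.range
    have he : (⇑(Pi.basisFun ℝ (Fin (n + 1)))) = fun i => Pi.single i (1:ℝ) := by
      funext i
      simp
    rw [he] at h
    exact h
  let Q : PreAbstractSimplicialComplex (Fin (n + 1) → ℝ) :=
    { faces := {s | s.Nonempty ∧ s ⊆ V}
      isRelLowerSet_faces := by
        intro s hs
        exact ⟨hs.1, fun t hts ht => ⟨ht, Finset.Subset.trans hts hs.2⟩⟩ }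
  let P := Geometry.SimplicialComplex.ofAffineIndependent (𝕜 := ℝ) Q (by
    refine hVi.mono ?_
    refine iUnion₂_subset fun s hs => ?_
    exact Finset.coe_subset.2 hs.2)
  have hVcard : V.card ≤ n + 1 := by
    refine Finset.card_image_le.trans ?_
    simp
  have hVP : V ∈ P.faces := ⟨⟨Pi.single 0 1, by simp [V]⟩, Finset.Subset.refl _⟩
  have hhull : convexHull ℝ (V : Set (Fin (n + 1) → ℝ)) = stdSimplex ℝ (Fin (n + 1)) := by
    rw [← convexHull_basis_eq_stdSimplex, hV]
    congr 1
    ext v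
    simp [Pi.single_apply, funext_iff, eq_comm]
  let F : (Fin n → Set.Icc (0 : ℝ) 1) → (Fin (n + 1) → ℝ) :=
    fun x => Fin.cons (1 - ∑ i, (x i : ℝ) / n) fun i => (x i : ℝ) / n
  have hFP : ∀ x, F x ∈ P.space := by
    intro x
    apply Geometry.SimplicialComplex.convexHull_subset_space hVP
    rw [hhull]
    refine ⟨fun j => ?_, ?_⟩
    · refine Fin.cases ?_ (fun i => ?_) j
      · simp only [F, Fin.cons_zero]
        have : ∑ i, (x i : ℝ) / n ≤ ∑ i : Fin n, (1:ℝ) / n :=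
          Finset.sum_le_sum fun i _ => by gcongr; exact (x i).2.2
        have h2 : ∑ i : Fin n, (1:ℝ) / n = 1 := by
          simp; field_simp
        linarith
      · simp only [F, Fin.cons_succ]
        exact div_nonneg (x i).2.1 (Nat.cast_nonneg n)
    · rw [Fin.sum_univ_succ]
      simp [F]
  refine ⟨n + 1, P, ?_, ?_, fun x => ⟨F x, hFP x⟩, ?_, ?_⟩
  · exact (Finset.finite_toSet V.powerset).subset fun s hs => by
      simpa using hs.2
  · intro s hs
    exact (Finset.card_le_card hs.2).trans hVcard
  · refine Continuous.subtype_mk ?_ _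
    refine continuous_pi fun j => ?_
    refine Fin.cases ?_ (fun i => ?_) j
    · simp only [F, Fin.cons_zero]
      fun_prop
    · simp only [F, Fin.cons_succ]
      fun_prop
  · intro x y hxy
    have h1 : F x = F y := congrArg Subtype.val hxy
    have h2 : x = y := by
      funext i
      have h3 := congrFun h1 i.succ
      simp only [F, Fin.cons_succ] at h3
      have hn' : (n:ℝ) ≠ 0 := by positivity
      exact Subtype.ext ((div_left_inj' hn').1 h3)
    rw [h2, dist_self]
    exact hε0

/-- **Theorem (Lindenstrauss–Weiss).** For `0 < ε < 1` and `n ≥ 1`,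
`Widim_ε([0,1]^n, d_{l^∞}) = n`: there is an `ε`-embedding of the cube into some polyhedron of
dimension `n`, but none into a polyhedron of dimension `< n`.  (Here `Fin n → Set.Icc 0 1`
carries the product (= sup) metric, which is exactly `d_{l^∞}`.) -/
theorem widim_cube (ε : ℝ) (hε0 : 0 < ε) (hε1 : ε < 1) (n : ℕ) (hn : 0 < n) :
    WidimLE (Fin n → Set.Icc (0 : ℝ) 1) dist ε n ∧
      ∀ m : ℕ, m < n → ¬ WidimLE (Fin n → Set.Icc (0 : ℝ) 1) dist ε m :=
  ⟨widim_cube_upper ε hε0 n hn, fun m hm => widim_cube_lower ε hε1 n m hm⟩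
end

section
/- Let $P$ be the cone over the three-point discrete space (a tripod: three unit segments glued at a common endpoint), with the graph metric $d$ in which each of the three edges has length one. Then for every $\epsilon \in (0,1)$ and every positive integer $n$, there does not exist an $\epsilon$-embedding of $(P^n, d_{l^\infty})$ into $\mathbb{R}^{2n-1}$; that is, there is no continuous map $f: P^n \to \mathbb{R}^{2n-1}$ such that $f(x) = f(y)$ implies $d_{l^\infty}(x,y) < \epsilon$. -/
open Set Filter Topology
open scoped ENNReal NNReal symmDiff

namespace TripodBU

/-- Mod 2 chains on finite lists of points. -/
abbrev Ch (E : Type) := List E →₀ ZMod 2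

noncomputable section

def cone {E : Type} (b : E) : Ch E →ₗ[ZMod 2] Ch E := Finsupp.lmapDomain _ _ (List.cons b)

def bdL {E : Type} : List E → Ch E
  | [] => 0
  | a :: l => Finsupp.single l 1 + cone a (bdL l)

def bd {E : Type} : Ch E →ₗ[ZMod 2] Ch E := Finsupp.linearCombination (ZMod 2) bdL

lemma cone_single {E : Type} (b : E) (l : List E) (c : ZMod 2) :
    cone b (Finsupp.single l c) = Finsupp.single (b :: l) c := by
  simp [cone, Finsupp.mapDomain_single]

lemma bd_single {E : Type} (l : List E) : bd (Finsupp.single l 1) = bdL l := by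
  simp [bd]

lemma add_self_ch {E : Type} (c : Ch E) : c + c = 0 := by
  ext l; simp only [Finsupp.add_apply, Finsupp.zero_apply]; exact CharTwo.add_self_eq_zero _

lemma lin_ext {E : Type} {M : Type} [AddCommMonoid M] [Module (ZMod 2) M]
    {f g : Ch E →ₗ[ZMod 2] M}
    (h : ∀ l, f (Finsupp.single l 1) = g (Finsupp.single l 1)) (c : Ch E) : f c = g c := by
  have : f = g := by
    apply Finsupp.lhom_ext'
    intro l
    ext
    simpa using h l
  rw [this]

lemma bd_cone {E : Type} (b : E) (c : Ch E) : bd (cone b c) = c + cone b (bd c) := by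
  have := lin_ext (f := bd ∘ₗ cone b) (g := LinearMap.id + cone b ∘ₗ bd) (c := c) (by
    intro l
    simp [cone_single, bd_single, bdL])
  simpa using this

lemma bd_bdL {E : Type} (l : List E) : bd (bdL l) = 0 := by
  induction l with
  | nil => simp [bdL]
  | cons a l ih =>
    simp only [bdL, map_add, bd_single, bd_cone, ih, map_zero, add_zero]
    exact add_self_ch _

lemma bd_bd {E : Type} (c : Ch E) : bd (bd c) = 0 := by
  have := lin_ext (f := bd ∘ₗ bd) (g := 0) (c := c) (by
    intro l
    simp [bd_single, bd_bdL])
  simpa using this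

/-- Barycentric subdivision operator with centers `β`. -/
def sd {E : Type} (β : List E → E) : ℕ → (Ch E →ₗ[ZMod 2] Ch E)
  | 0 => LinearMap.id
  | k + 1 => Finsupp.linearCombination (ZMod 2) (fun l => cone (β l) (sd β k (bdL l)))

lemma sd_succ_single {E : Type} (β : List E → E) (k : ℕ) (l : List E) :
    sd β (k + 1) (Finsupp.single l 1) = cone (β l) (sd β k (bdL l)) := by
  simp [sd]

lemma bd_sd {E : Type} (β : List E → E) (k : ℕ) (c : Ch E) :
    bd (sd β (k + 1) c) = sd β k (bd c) := by
  induction k generalizing c with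
  | zero =>
    have := lin_ext (f := bd ∘ₗ sd β 1) (g := sd β 0 ∘ₗ bd) (c := c) (by
      intro l
      simp [sd_succ_single, bd_single, bd_cone, sd, bd_bdL])
    simpa using this
  | succ k ih =>
    have := lin_ext (f := bd ∘ₗ sd β (k + 2)) (g := sd β (k + 1) ∘ₗ bd) (c := c) (by
      intro l
      simp [sd_succ_single, bd_single, bd_cone, ih, bd_bdL])
    simpa using this

/-- The antipodal action on chains. -/
def anti {E : Type} [Neg E] : Ch E →ₗ[ZMod 2] Ch E :=
  Finsupp.lmapDomain _ _ (List.map (fun x => -x))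

lemma anti_single {E : Type} [Neg E] (l : List E) (c : ZMod 2) :
    anti (Finsupp.single l c) = Finsupp.single (l.map (fun x => -x)) c := by
  simp [anti, Finsupp.mapDomain_single]

lemma anti_cone {E : Type} [Neg E] (b : E) (c : Ch E) :
    anti (cone b c) = cone (-b) (anti c) := by
  have := lin_ext (f := anti ∘ₗ cone b) (g := cone (-b) ∘ₗ anti) (c := c) (by
    intro l
    simp [cone_single, anti_single])
  simpa using this

lemma anti_bdL {E : Type} [Neg E] (l : List E) :
    anti (bdL l) = bdL (l.map (fun x => -x)) := by
  induction l with
  | nil => simp [bdL]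
  | cons a l ih => simp [bdL, anti_single, anti_cone, ih]

lemma anti_sd {E : Type} [Neg E] (β : List E → E)
    (hβ : ∀ l, β (l.map (fun x => -x)) = - β l) (k : ℕ) (c : Ch E) :
    anti (sd β k c) = sd β k (anti c) := by
  induction k generalizing c with
  | zero => simp [sd]
  | succ k ih =>
    have := lin_ext (f := anti ∘ₗ sd β (k + 1)) (g := sd β (k + 1) ∘ₗ anti) (c := c) (by
      intro l
      simp [sd_succ_single, anti_single, anti_cone, ih, anti_bdL, hβ])
    simpa using this

/-- The product cocycle. -/
def psiL {E : Type} (s : ℕ → E → ZMod 2) : List E → ZMod 2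
  | [] => 0
  | [_] => 1
  | a :: b :: l => (s l.length a + s l.length b) * psiL s (b :: l)

def phiL {E : Type} (s : ℕ → E → ZMod 2) : List E → ZMod 2
  | [] => 1
  | a :: l => s l.length a * psiL s (a :: l)

def psi {E : Type} (s : ℕ → E → ZMod 2) : Ch E →ₗ[ZMod 2] ZMod 2 :=
  Finsupp.linearCombination (ZMod 2) (psiL s)

def phi {E : Type} (s : ℕ → E → ZMod 2) : Ch E →ₗ[ZMod 2] ZMod 2 :=
  Finsupp.linearCombination (ZMod 2) (phiL s)

lemma psi_single {E : Type} (s : ℕ → E → ZMod 2) (l : List E) :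
    psi s (Finsupp.single l 1) = psiL s l := by simp [psi]

lemma phi_single {E : Type} (s : ℕ → E → ZMod 2) (l : List E) :
    phi s (Finsupp.single l 1) = phiL s l := by simp [phi]

/-- Linear functionals/maps agreeing on the lists in `S` agree on chains supported there. -/
lemma lin_eq_on {E : Type} {M : Type} [AddCommMonoid M] [Module (ZMod 2) M]
    {f g : Ch E →ₗ[ZMod 2] M} {S : Set (List E)}
    (h : ∀ l ∈ S, f (Finsupp.single l 1) = g (Finsupp.single l 1)) {c : Ch E}
    (hc : c ∈ Finsupp.supported (ZMod 2) (ZMod 2) S) : f c = g c := by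
  rw [Finsupp.supported_eq_span_single] at hc
  refine LinearMap.eqOn_span (s := (fun i => Finsupp.single i (1 : ZMod 2)) '' S) ?_ hc
  rintro _ ⟨l, hl, rfl⟩
  exact h l hl

lemma map_supported {E : Type}
    {f : Ch E →ₗ[ZMod 2] Ch E} {S T : Set (List E)}
    (h : ∀ l ∈ S, f (Finsupp.single l 1) ∈ Finsupp.supported (ZMod 2) (ZMod 2) T) {c : Ch E}
    (hc : c ∈ Finsupp.supported (ZMod 2) (ZMod 2) S) :
    f c ∈ Finsupp.supported (ZMod 2) (ZMod 2) T := by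
  rw [Finsupp.supported_eq_span_single] at hc
  have : Submodule.span (ZMod 2) ((fun i => Finsupp.single i (1 : ZMod 2)) '' S) ≤
      (Finsupp.supported (ZMod 2) (ZMod 2) T).comap f := by
    rw [Submodule.span_le]
    rintro _ ⟨l, hl, rfl⟩
    exact h l hl
  exact this hc

lemma supported_mono' {E : Type} {S T : Set (List E)} (h : S ⊆ T) {c : Ch E}
    (hc : c ∈ Finsupp.supported (ZMod 2) (ZMod 2) S) :
    c ∈ Finsupp.supported (ZMod 2) (ZMod 2) T := Finsupp.supported_mono h hc

lemma cone_supported {E : Type} (b : E) {S T : Set (List E)}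
    (h : ∀ l ∈ S, b :: l ∈ T) {c : Ch E}
    (hc : c ∈ Finsupp.supported (ZMod 2) (ZMod 2) S) :
    cone b c ∈ Finsupp.supported (ZMod 2) (ZMod 2) T := by
  refine map_supported ?_ hc
  intro l hl
  rw [cone_single]
  exact Finsupp.single_mem_supported _ _ (h l hl)

lemma bdL_supported {E : Type} (σ : List E) :
    bdL σ ∈ Finsupp.supported (ZMod 2) (ZMod 2)
      {τ : List E | τ.length + 1 = σ.length ∧ ∀ x ∈ τ, x ∈ σ} := by
  induction σ with
  | nil => simp [bdL]
  | cons a l ih =>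
    refine Submodule.add_mem _ ?_ ?_
    · apply Finsupp.single_mem_supported
      simp +contextual
    · refine cone_supported a ?_ ih
      rintro τ ⟨h1, h2⟩
      refine ⟨by simp [h1], ?_⟩
      intro x hx
      rcases List.mem_cons.1 hx with rfl | hx
      · simp
      · simp [h2 x hx]

lemma psi_cone_cone {E : Type} (s : ℕ → E → ZMod 2) (a b : E) (k : ℕ) {c : Ch E}
    (hc : c ∈ Finsupp.supported (ZMod 2) (ZMod 2) {τ : List E | τ.length = k}) :
    psi s (cone a (cone b c)) = (s k a + s k b) * psi s (cone b c) := by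
  have := lin_eq_on (f := psi s ∘ₗ cone a ∘ₗ cone b)
    (g := (s k a + s k b) • (psi s ∘ₗ cone b)) (c := c) (by
      intro l hl
      simp only [Set.mem_setOf_eq] at hl
      simp [cone_single, psi_single, psiL, hl]) hc
  simpa using this

lemma phi_cone {E : Type} (s : ℕ → E → ZMod 2) (a : E) (k : ℕ) {c : Ch E}
    (hc : c ∈ Finsupp.supported (ZMod 2) (ZMod 2) {τ : List E | τ.length = k}) :
    phi s (cone a c) = s k a * psi s (cone a c) := by
  have := lin_eq_on (f := phi s ∘ₗ cone a)
    (g := s k a • (psi s ∘ₗ cone a)) (c := c) (by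
      intro l hl
      simp only [Set.mem_setOf_eq] at hl
      simp [cone_single, psi_single, phi_single, phiL, hl]) hc
  simpa using this

lemma psi_cocycle {E : Type} (s : ℕ → E → ZMod 2) (l : List E) (a b : E) :
    psi s (cone a (bdL (b :: l))) = psiL s (b :: l) := by
  induction l generalizing a b with
  | nil => simp [bdL, cone_single, psi_single, psiL]
  | cons c l ih =>
    have h1 : bdL (c :: l) ∈ Finsupp.supported (ZMod 2) (ZMod 2)
        {τ : List E | τ.length = l.length} :=
      supported_mono' (by rintro τ ⟨h, -⟩; simpa using h) (bdL_supported (c :: l))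
    rw [show bdL (b :: c :: l) = Finsupp.single (c :: l) 1 + cone b (bdL (c :: l)) from rfl,
      map_add, map_add, cone_single, psi_single, psi_cone_cone s a b _ h1, ih]
    simp only [psiL]
    have := CharTwo.add_self_eq_zero (s l.length a)
    linear_combination (psiL s (c :: l)) * this

lemma phi_bdL {E : Type} (s : ℕ → E → ZMod 2) (a : E) (l : List E) :
    phi s (bdL (a :: l)) = psiL s (a :: l) := by
  cases l with
  | nil => simp [bdL, phi_single, psiL, phiL]
  | cons b l =>
    have h1 : bdL (b :: l) ∈ Finsupp.supported (ZMod 2) (ZMod 2)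
        {τ : List E | τ.length = l.length} :=
      supported_mono' (by rintro τ ⟨h, -⟩; simpa using h) (bdL_supported (b :: l))
    rw [show bdL (a :: b :: l) = Finsupp.single (b :: l) 1 + cone a (bdL (b :: l)) from rfl,
      map_add, phi_single, phi_cone s a _ h1, psi_cocycle]
    simp only [psiL, phiL]
    ring

lemma phi_bd {E : Type} (s : ℕ → E → ZMod 2) {c : Ch E}
    (hc : c ∈ Finsupp.supported (ZMod 2) (ZMod 2) {τ : List E | τ ≠ []}) :
    phi s (bd c) = psi s c := by
  refine lin_eq_on (f := phi s ∘ₗ bd) (g := psi s) (c := c) ?_ hc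
  intro l hl
  cases l with
  | nil => simp at hl
  | cons a l => simp [bd_single, psi_single, phi_bdL]

lemma psiL_anti {E : Type} [Neg E] (s : ℕ → E → ZMod 2) (l : List E)
    (h : ∀ x ∈ l, ∀ j, s j (-x) = s j x + 1) :
    psiL s (l.map (fun x => -x)) = psiL s l := by
  induction l with
  | nil => simp
  | cons a l ih =>
    cases l with
    | nil => simp [psiL]
    | cons b l =>
      have ih' := ih (fun x hx => h x (List.mem_cons_of_mem _ hx))
      simp only [List.map_cons] at ih' ⊢
      simp only [psiL, ih', List.length_map]
      rw [h a (by simp), h b (by simp)]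
      have := CharTwo.add_self_eq_zero (1 : ZMod 2)
      linear_combination (psiL s (b :: l)) * this

lemma phi_anti {E : Type} [Neg E] (s : ℕ → E → ZMod 2) {c : Ch E}
    (hc : c ∈ Finsupp.supported (ZMod 2) (ZMod 2)
      {τ : List E | τ ≠ [] ∧ ∀ x ∈ τ, ∀ j, s j (-x) = s j x + 1}) :
    phi s (c + anti c) = psi s c := by
  refine lin_eq_on (f := phi s ∘ₗ (LinearMap.id + anti)) (g := psi s) (c := c) ?_ hc
  rintro l ⟨hl, h⟩
  cases l with
  | nil => simp at hl
  | cons a l =>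
    have := psiL_anti s (a :: l) h
    simp only [List.map_cons] at this
    simp [psi_single, phi_single, anti_single, phiL, this]
    rw [h a (by simp)]
    have := CharTwo.add_self_eq_zero (s l.length a)
    linear_combination (psiL s (a :: l)) * this

/-- A nonzero value of the cocycle forces each sign function to change. -/
lemma psiL_ne_zero {E : Type} (s : ℕ → E → ZMod 2) (l : List E) (h : psiL s l ≠ 0)
    (j : ℕ) (hj : j + 1 < l.length) : ∃ a ∈ l, ∃ b ∈ l, s j a ≠ s j b := by
  induction l with
  | nil => simp at hj
  | cons a l ih =>
    cases l with
    | nil => simp at hj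
    | cons b l =>
      simp only [psiL] at h
      have h1 := left_ne_zero_of_mul h
      have h2 := right_ne_zero_of_mul h
      by_cases hjl : j = l.length
      · subst hjl
        refine ⟨a, by simp, b, by simp, ?_⟩
        intro he
        apply h1
        rw [he]
        exact CharTwo.add_self_eq_zero _
      · obtain ⟨x, hx, y, hy, hxy⟩ := ih h2 (by simp at hj ⊢; omega)
        exact ⟨x, List.mem_cons_of_mem _ hx, y, List.mem_cons_of_mem _ hy, hxy⟩


/-- Lists of length `k` in `K` with pairwise distances at most `D`. -/
def Gd {m : ℕ} (k : ℕ) (K : Set (Fin m → ℝ)) (D : ℝ) : Set (List (Fin m → ℝ)) :=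
  {σ | σ.length = k ∧ (∀ x ∈ σ, x ∈ K) ∧ ∀ x ∈ σ, ∀ y ∈ σ, dist x y ≤ D}

def bary {m : ℕ} (l : List (Fin m → ℝ)) : Fin m → ℝ := ((l.length : ℝ)⁻¹) • l.sum

lemma bary_neg {m : ℕ} (l : List (Fin m → ℝ)) :
    bary (l.map (fun x => -x)) = - bary l := by
  have : (l.map (fun x => -x)).sum = - l.sum := by
    induction l with
    | nil => simp
    | cons a l ih => simp [ih, add_comm]
  simp [bary, this]

lemma bary_mem {m : ℕ} {K : Set (Fin m → ℝ)} (hK : Convex ℝ K) (l : List (Fin m → ℝ))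
    (hl : l ≠ []) (h : ∀ x ∈ l, x ∈ K) : bary l ∈ K := by
  induction l with
  | nil => simp at hl
  | cons a l ih =>
    cases l with
    | nil => simpa [bary] using h a (by simp)
    | cons b l =>
      have ih' := ih (by simp) (fun x hx => h x (List.mem_cons_of_mem _ hx))
      have ha := h a (by simp)
      set L := b :: l with hL
      have hn : (0 : ℝ) < (L.length : ℝ) := by simp [hL]; positivity
      have key : bary (a :: L) = (1 / ((L.length : ℝ) + 1)) • a
          + ((L.length : ℝ) / ((L.length : ℝ) + 1)) • bary L := by
        simp only [bary, List.length_cons, List.sum_cons, smul_add, smul_smul]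
        push_cast
        congr 2
        · rw [one_div]
        · field_simp
      rw [key]
      refine hK ha ih' (by positivity) (by positivity) ?_
      field_simp
      ring

lemma sum_sub_le {m : ℕ} (l : List (Fin m → ℝ)) (v : Fin m → ℝ) (D : ℝ)
    (h : ∀ x ∈ l, dist x v ≤ D) : ‖l.sum - (l.length : ℝ) • v‖ ≤ l.length * D := by
  induction l with
  | nil => simp
  | cons a l ih =>
    have ih' := ih (fun x hx => h x (List.mem_cons_of_mem _ hx))
    have ha := h a (by simp)
    rw [dist_eq_norm] at ha
    have : (a :: l).sum - ((a :: l).length : ℝ) • v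
        = (a - v) + (l.sum - (l.length : ℝ) • v) := by
      simp [add_smul]; abel
    rw [this]
    refine (norm_add_le _ _).trans ?_
    simp only [List.length_cons]
    push_cast
    linarith

lemma sum_sub_le' {m : ℕ} (l : List (Fin m → ℝ)) (v : Fin m → ℝ) (D : ℝ) (hv : v ∈ l)
    (h : ∀ x ∈ l, dist x v ≤ D) : ‖l.sum - (l.length : ℝ) • v‖ ≤ (l.length - 1) * D := by
  induction l with
  | nil => simp at hv
  | cons a l ih =>
    have ht := fun x hx => h x (List.mem_cons_of_mem a hx)
    have ha := h a (by simp)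
    rw [dist_eq_norm] at ha
    have : (a :: l).sum - ((a :: l).length : ℝ) • v
        = (a - v) + (l.sum - (l.length : ℝ) • v) := by
      simp [add_smul]; abel
    rw [this]
    simp only [List.length_cons]
    push_cast
    rcases List.mem_cons.1 hv with rfl | hv
    · have := sum_sub_le l v D ht
      simpa using this
    · have := ih hv ht
      refine (norm_add_le _ _).trans ?_
      linarith

lemma dist_bary {m : ℕ} (l : List (Fin m → ℝ)) (v : Fin m → ℝ) (D : ℝ) (hD : 0 ≤ D) (M : ℕ)
    (hM : l.length ≤ M) (hv : v ∈ l)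
    (h : ∀ x ∈ l, dist x v ≤ D) : dist v (bary l) ≤ (1 - 1 / (M : ℝ)) * D := by
  have h0 : 0 < l.length := List.length_pos_of_mem hv
  have hn : (0 : ℝ) < (l.length : ℝ) := by exact_mod_cast h0
  have hMr : (l.length : ℝ) ≤ M := by exact_mod_cast hM
  have h1 := sum_sub_le' l v D hv h
  have h2 : bary l - v = (l.length : ℝ)⁻¹ • (l.sum - (l.length : ℝ) • v) := by
    rw [smul_sub, smul_smul, inv_mul_cancel₀ hn.ne', one_smul, bary]
  rw [dist_comm, dist_eq_norm, h2, norm_smul, Real.norm_of_nonneg (by positivity)]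
  calc (l.length : ℝ)⁻¹ * ‖l.sum - (l.length : ℝ) • v‖
      ≤ (l.length : ℝ)⁻¹ * ((l.length - 1) * D) := by gcongr
    _ = (1 - 1 / (l.length : ℝ)) * D := by field_simp
    _ ≤ (1 - 1 / (M : ℝ)) * D := by gcongr

lemma sd_supported {m : ℕ} (M : ℕ) (hM : 0 < M) (k : ℕ) (hk : k ≤ M) (K : Set (Fin m → ℝ))
    (hK : Convex ℝ K) (D : ℝ) (hD : 0 ≤ D) (σ : List (Fin m → ℝ)) (hσ : σ ∈ Gd k K D) :
    sd bary k (Finsupp.single σ 1) ∈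
      Finsupp.supported (ZMod 2) (ZMod 2) (Gd k K ((1 - 1 / (M : ℝ)) * D)) := by
  have hr : 0 ≤ 1 - 1 / (M : ℝ) := by
    have : (1 : ℝ) ≤ M := by exact_mod_cast hM
    rw [sub_nonneg, div_le_one (by positivity)]
    exact this
  induction k generalizing K σ with
  | zero =>
    have : σ = [] := List.length_eq_zero_iff.1 hσ.1
    subst this
    simp only [sd, LinearMap.id_apply]
    apply Finsupp.single_mem_supported
    simp [Gd]
  | succ k ih =>
    obtain ⟨h1, h2, h3⟩ := hσ
    rw [sd_succ_single]
    set b := bary σ with hb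
    have hbK : b ∈ K := bary_mem hK σ (by rintro rfl; simp at h1) h2
    set K' := K ∩ Metric.closedBall b ((1 - 1 / (M : ℝ)) * D) with hK'
    have hK'c : Convex ℝ K' := hK.inter (convex_closedBall _ _)
    refine cone_supported (S := Gd k K' ((1 - 1 / (M : ℝ)) * D)) b ?_ ?_
    · rintro τ ⟨t1, t2, t3⟩
      refine ⟨by simp [t1], ?_, ?_⟩
      · intro x hx
        rcases List.mem_cons.1 hx with rfl | hx
        · exact hbK
        · exact (t2 x hx).1
      · intro x hx y hy
        rcases List.mem_cons.1 hx with rfl | hx <;> rcases List.mem_cons.1 hy with rfl | hy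
        · simpa using mul_nonneg hr hD
        · rw [dist_comm]; exact (t2 y hy).2
        · exact (t2 x hx).2
        · exact t3 x hx y hy
    · refine map_supported ?_ (bdL_supported σ)
      rintro τ ⟨t1, t2⟩
      refine ih (by omega) K' hK'c τ ⟨by omega, ?_, ?_⟩
      · intro x hx
        refine ⟨h2 x (t2 x hx), ?_⟩
        exact dist_bary σ x D hD M (by omega) (t2 x hx) (fun y hy => h3 y hy x (t2 x hx))
      · intro x hx y hy
        exact h3 x (t2 x hx) y (t2 y hy)

/-- A facet of the cross-polytope. -/
def facet {m : ℕ} (e : Fin m → ℝ) : Set (Fin m → ℝ) :=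
  {x | (∀ j, 0 ≤ e j * x j) ∧ ∑ j, e j * x j = 1}

lemma facet_convex {m : ℕ} (e : Fin m → ℝ) : Convex ℝ (facet e) := by
  rintro x ⟨hx1, hx2⟩ y ⟨hy1, hy2⟩ a b ha hb hab
  have key : ∀ j, e j * (a • x + b • y) j = a * (e j * x j) + b * (e j * y j) := by
    intro j; simp; ring
  refine ⟨fun j => ?_, ?_⟩
  · rw [key]
    have := hx1 j; have := hy1 j
    positivity
  · simp_rw [key]
    rw [Finset.sum_add_distrib, ← Finset.mul_sum, ← Finset.mul_sum, hx2, hy2]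
    linarith

lemma facet_l1 {m : ℕ} (e : Fin m → ℝ) (he : ∀ j, |e j| = 1) {x : Fin m → ℝ}
    (hx : x ∈ facet e) : ∑ j, |x j| = 1 := by
  rw [← hx.2]
  refine Finset.sum_congr rfl fun j _ => ?_
  rw [← abs_of_nonneg (hx.1 j), abs_mul, he j, one_mul]

/-- Good lists: contained in a facet of the cross-polytope, with small diameter. -/
def Good (m k : ℕ) (D : ℝ) : Set (List (Fin m → ℝ)) :=
  {σ | ∃ e : Fin m → ℝ, (∀ j, |e j| = 1) ∧ σ ∈ Gd k (facet e) D}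

lemma sd_good {m k : ℕ} (hm : 0 < m) (hk : k ≤ m) (D : ℝ) (hD : 0 ≤ D) {c : Ch (Fin m → ℝ)}
    (hc : c ∈ Finsupp.supported (ZMod 2) (ZMod 2) (Good m k D)) :
    sd bary k c ∈
      Finsupp.supported (ZMod 2) (ZMod 2) (Good m k ((1 - 1 / (m : ℝ)) * D)) := by
  refine map_supported ?_ hc
  rintro σ ⟨e, he, hσ⟩
  refine supported_mono' ?_ (sd_supported m hm k hk (facet e) (facet_convex e) D hD σ hσ)
  intro τ hτ
  exact ⟨e, he, hτ⟩

lemma sd_iter_good {m k : ℕ} (hm : 0 < m) (hk : k ≤ m) (D : ℝ) (hD : 0 ≤ D) (N : ℕ)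
    {c : Ch (Fin m → ℝ)}
    (hc : c ∈ Finsupp.supported (ZMod 2) (ZMod 2) (Good m k D)) :
    (sd bary k)^[N] c ∈
      Finsupp.supported (ZMod 2) (ZMod 2) (Good m k ((1 - 1 / (m : ℝ)) ^ N * D)) := by
  have hr : 0 ≤ 1 - 1 / (m : ℝ) := by
    have : (1 : ℝ) ≤ m := by exact_mod_cast hm
    rw [sub_nonneg, div_le_one (by positivity)]
    exact this
  induction N with
  | zero => simpa using hc
  | succ N ih =>
    rw [Function.iterate_succ_apply']
    have := sd_good hm hk _ (by positivity) ih
    rwa [pow_succ', mul_assoc]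

def evec (m i : ℕ) : Fin m → ℝ := fun j => if j.val = i then 1 else 0

/-- The coarse chains on the octahedral sphere. -/
def full (m : ℕ) : ℕ → Ch (Fin m → ℝ)
  | 0 => Finsupp.single [] 1
  | i + 1 => cone (evec m i) (full m i) + cone (-evec m i) (full m i)

lemma anti_full (m i : ℕ) : anti (full m i) = full m i := by
  induction i with
  | zero => simp [full, anti_single]
  | succ i ih => simp [full, anti_cone, ih, add_comm]

lemma bd_full (m i : ℕ) : bd (full m i) = 0 := by
  induction i with
  | zero => simp [full, bd_single, bdL]
  | succ i ih => simp [full, bd_cone, ih, add_self_ch]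

lemma cone_mem_aux (m i : ℕ) (hi : i < m) (d : ℝ) (hd : |d| = 1) {σ : List (Fin m → ℝ)}
    (hσ : ∃ e : Fin m → ℝ, (∀ j, |e j| = 1) ∧ σ.length = i ∧
      ∀ x ∈ σ, x ∈ facet e ∧ ∀ j : Fin m, i ≤ j.val → x j = 0) :
    ∃ e : Fin m → ℝ, (∀ j, |e j| = 1) ∧ (d • evec m i :: σ).length = i + 1 ∧
      ∀ x ∈ (d • evec m i :: σ), x ∈ facet e ∧ ∀ j : Fin m, i + 1 ≤ j.val → x j = 0 := by
  obtain ⟨e, he, hl, h⟩ := hσ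
  have hdd : d * d = 1 := by rw [← abs_mul_abs_self, hd, one_mul]
  refine ⟨Function.update e ⟨i, hi⟩ d, ?_, by simp [hl], ?_⟩
  · intro j
    by_cases hj : j = ⟨i, hi⟩
    · subst hj; simpa using hd
    · simpa [hj] using he j
  · intro x hx
    rcases List.mem_cons.1 hx with rfl | hx
    · have key : ∀ j : Fin m, Function.update e ⟨i, hi⟩ d j * (d • evec m i) j
          = if j = ⟨i, hi⟩ then 1 else 0 := by
        intro j
        by_cases hj : j = ⟨i, hi⟩
        · subst hj; simp [evec, hdd]
        · have : j.val ≠ i := fun h => hj (Fin.ext h)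
          simp [hj, evec, this]
      refine ⟨⟨fun j => ?_, ?_⟩, ?_⟩
      · rw [key]; split_ifs <;> norm_num
      · simp_rw [key]; simp
      · intro j hj
        have : j.val ≠ i := by omega
        simp [evec, this]
    · obtain ⟨⟨h1, h2⟩, h3⟩ := h x hx
      have key : ∀ j : Fin m, Function.update e ⟨i, hi⟩ d j * x j = e j * x j := by
        intro j
        by_cases hj : j = ⟨i, hi⟩
        · subst hj; simp [h3 ⟨i, hi⟩ le_rfl]
        · simp [hj]
      refine ⟨⟨fun j => ?_, ?_⟩, fun j hj => h3 j (by omega)⟩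
      · rw [key]; exact h1 j
      · simp_rw [key]; exact h2

lemma full_supp_aux (m i : ℕ) (hi : i ≤ m) :
    full m i ∈ Finsupp.supported (ZMod 2) (ZMod 2) {σ | ∃ e : Fin m → ℝ, (∀ j, |e j| = 1) ∧
      σ.length = i ∧ ∀ x ∈ σ, x ∈ facet e ∧ ∀ j : Fin m, i ≤ j.val → x j = 0} := by
  induction i with
  | zero =>
    apply Finsupp.single_mem_supported
    exact ⟨fun _ => 1, by simp, rfl, by simp⟩
  | succ i ih =>
    refine Submodule.add_mem _ ?_ ?_
    · refine cone_supported _ ?_ (ih (by omega))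
      intro l hl
      have := cone_mem_aux m i (by omega) 1 (by simp) hl
      rwa [one_smul] at this
    · refine cone_supported _ ?_ (ih (by omega))
      intro l hl
      have := cone_mem_aux m i (by omega) (-1) (by simp) hl
      rwa [neg_one_smul] at this

lemma facet_dist {m : ℕ} (e : Fin m → ℝ) (he : ∀ j, |e j| = 1) {x y : Fin m → ℝ}
    (hx : x ∈ facet e) (hy : y ∈ facet e) : dist x y ≤ 2 := by
  have hc : ∀ z ∈ facet e, ∀ j, |z j| ≤ 1 := by
    intro z hz j
    rw [← facet_l1 e he hz]
    exact Finset.single_le_sum (f := fun j => |z j|) (fun j _ => abs_nonneg _) (Finset.mem_univ j)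
  rw [dist_pi_le_iff (by norm_num)]
  intro j
  rw [Real.dist_eq]
  have h1 := abs_le.1 (hc x hx j)
  have h2 := abs_le.1 (hc y hy j)
  rw [abs_le]
  constructor <;> linarith

lemma upper_good (m i : ℕ) (hi : i < m) :
    cone (evec m i) (full m i) ∈ Finsupp.supported (ZMod 2) (ZMod 2) (Good m (i + 1) 2) := by
  refine cone_supported _ ?_ (full_supp_aux m i hi.le)
  intro l hl
  have := cone_mem_aux m i hi 1 (by simp) hl
  rw [one_smul] at this
  obtain ⟨e, he, h1, h2⟩ := this
  exact ⟨e, he, h1, fun x hx => (h2 x hx).1, fun x hx y hy => facet_dist e he (h2 x hx).1 (h2 y hy).1⟩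

lemma bd_sd_iter {E : Type} (β : List E → E) (k N : ℕ) (c : Ch E) :
    bd ((sd β (k + 1))^[N] c) = (sd β k)^[N] (bd c) := by
  induction N with
  | zero => simp
  | succ N ih => rw [Function.iterate_succ_apply', Function.iterate_succ_apply', bd_sd, ih]

lemma anti_sd_iter {E : Type} [Neg E] (β : List E → E)
    (hβ : ∀ l, β (l.map (fun x => -x)) = - β l) (k N : ℕ) (c : Ch E) :
    anti ((sd β k)^[N] c) = (sd β k)^[N] (anti c) := by
  induction N with
  | zero => simp
  | succ N ih => rw [Function.iterate_succ_apply', Function.iterate_succ_apply', anti_sd β hβ, ih]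

lemma sd_iter_add {E : Type} (β : List E → E) (k N : ℕ) (c d : Ch E) :
    (sd β k)^[N] (c + d) = (sd β k)^[N] c + (sd β k)^[N] d := by
  induction N with
  | zero => simp
  | succ N ih => rw [Function.iterate_succ_apply', Function.iterate_succ_apply',
      Function.iterate_succ_apply', ih, map_add]

lemma facet_ne_zero {m : ℕ} (e : Fin m → ℝ) {x : Fin m → ℝ} (hx : x ∈ facet e) : x ≠ 0 := by
  rintro rfl
  have := hx.2
  simp at this

lemma phi_full (m N : ℕ) (s : ℕ → (Fin m → ℝ) → ZMod 2)
    (hs : ∀ x : Fin m → ℝ, x ≠ 0 → ∀ j, s j (-x) = s j x + 1) (i : ℕ) (hi : i < m) :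
    psi s ((sd bary (i + 1))^[N] (cone (evec m i) (full m i))) = 1 := by
  have hm : 0 < m := by omega
  have hg : ∀ i, i < m → (sd bary (i + 1))^[N] (cone (evec m i) (full m i)) ∈
      Finsupp.supported (ZMod 2) (ZMod 2)
        {τ : List (Fin m → ℝ) | τ ≠ [] ∧ ∀ x ∈ τ, ∀ j, s j (-x) = s j x + 1} := by
    intro i hi
    refine supported_mono' ?_ (sd_iter_good hm (by omega) 2 (by norm_num) N (upper_good m i hi))
    rintro τ ⟨e, he, h1, h2, -⟩
    exact ⟨by rintro rfl; simp at h1, fun x hx => hs x (facet_ne_zero e (h2 x hx))⟩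
  have hb : ∀ i, i < m → psi s ((sd bary (i + 1))^[N] (cone (evec m i) (full m i)))
      = phi s ((sd bary i)^[N] (full m i)) := by
    intro i hi
    rw [← phi_bd s (supported_mono' (fun τ hτ => hτ.1) (hg i hi)), bd_sd_iter, bd_cone, bd_full,
      map_zero, add_zero]
  induction i with
  | zero =>
    rw [hb 0 hi]
    have : (sd (bary (m := m)) 0)^[N] (full m 0) = full m 0 := by
      induction N with
      | zero => rfl
      | succ N ih => rw [Function.iterate_succ_apply']; simp_all [sd]
    rw [this]
    simp [full, phi_single, phiL]
  | succ i ih =>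
    rw [hb (i + 1) hi]
    have h1 : full m (i + 1) = cone (evec m i) (full m i) + anti (cone (evec m i) (full m i)) := by
      rw [anti_cone, anti_full]; rfl
    rw [h1, sd_iter_add, ← anti_sd_iter bary bary_neg, phi_anti s (hg i (by omega)), ih (by omega)]

open Classical in
lemma exists_sign {m : ℕ} (g : ℕ → (Fin m → ℝ) → ℝ) (hodd : ∀ j x, g j (-x) = - g j x) :
    ∃ s : ℕ → (Fin m → ℝ) → ZMod 2, (∀ x, x ≠ 0 → ∀ j, s j (-x) = s j x + 1) ∧
      ∀ j x y, s j x ≠ s j y → (g j x ≤ 0 ∧ 0 ≤ g j y) ∨ (g j y ≤ 0 ∧ 0 ≤ g j x) := by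
  refine ⟨fun j x => if 0 < g j x then 1 else if g j x < 0 then 0 else
    if WellOrderingRel x (-x) then 1 else 0, ?_, ?_⟩
  · intro x hx j
    have hne : x ≠ -x := by
      intro h
      apply hx
      funext i
      have := congrFun h i
      simp only [Pi.neg_apply] at this
      simp only [Pi.zero_apply]
      linarith
    have two : (1 : ZMod 2) + 1 = 0 := by decide
    simp only [hodd, neg_neg, Left.neg_pos_iff, Left.neg_neg_iff]
    rcases lt_trichotomy (g j x) 0 with h | h | h
    · simp [h, h.not_gt]
    · simp only [h, lt_irrefl, if_false]
      rcases trichotomous_of WellOrderingRel x (-x) with h' | h' | h'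
      · have : ¬ WellOrderingRel (-x) x := asymm h'
        simp [h', this, two]
      · exact absurd h' hne
      · have : ¬ WellOrderingRel x (-x) := asymm h'
        simp [h', this]
    · simp [h, h.not_gt, two]
  · intro j x y h
    by_contra hcon
    push Not at hcon
    apply h
    rcases lt_trichotomy (g j x) 0 with h1 | h1 | h1 <;>
      rcases lt_trichotomy (g j y) 0 with h2 | h2 | h2
    · simp [h1, h2, h1.not_gt, h2.not_gt]
    · exact absurd (hcon.1 h1.le) (by simp [h2])
    · exact absurd (hcon.1 h1.le) (by simp [h2.le])
    · exact absurd (hcon.2 h2.le) (by simp [h1])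
    · exact absurd (hcon.2 h2.le) (by simp [h1])
    · exact absurd (hcon.1 h1.le) (by simp [h2.le])
    · exact absurd (hcon.2 h2.le) (by simp [h1.le])
    · exact absurd (hcon.2 h2.le) (by simp [h1.le])
    · simp [h1, h2]

/-- Small simplices on which all the `g j` change sign. -/
lemma exists_small {m : ℕ} (hm : 0 < m) (g : ℕ → (Fin m → ℝ) → ℝ)
    (hodd : ∀ j x, g j (-x) = - g j x) (N : ℕ) :
    ∃ σ ∈ Good m m ((1 - 1 / (m : ℝ)) ^ N * 2), ∀ j, j + 1 < m → ∃ a ∈ σ, ∃ b ∈ σ,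
      g j a ≤ 0 ∧ 0 ≤ g j b := by
  obtain ⟨s, hs1, hs2⟩ := exists_sign g hodd
  obtain ⟨i, rfl⟩ : ∃ i, m = i + 1 := ⟨m - 1, by omega⟩
  have h1 := phi_full (i + 1) N s hs1 i (by omega)
  have h2 := sd_iter_good hm le_rfl 2 (by norm_num) N (upper_good (i + 1) i (by omega))
  set c := (sd bary (i + 1))^[N] (cone (evec (i + 1) i) (full (i + 1) i)) with hc
  by_contra hcon
  push Not at hcon
  have : psi s c = (0 : Ch (Fin (i + 1) → ℝ) →ₗ[ZMod 2] ZMod 2) c := by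
    refine lin_eq_on ?_ h2
    intro σ hσ
    rw [psi_single]
    by_contra hne
    obtain ⟨j, hj, hj'⟩ := hcon σ hσ
    have hlen : σ.length = i + 1 := by obtain ⟨e, _, h, _⟩ := hσ; exact h
    obtain ⟨a, ha, b, hb, hab⟩ := psiL_ne_zero s σ hne j (by omega)
    rcases hs2 j a b hab with h | h
    · exact absurd h.2 (by simpa using hj' a ha b hb h.1)
    · exact absurd h.2 (by simpa using hj' b hb a ha h.1)
  rw [h1] at this
  simp at this

/-- Borsuk–Ulam on the octahedral sphere. -/
theorem borsuk_ulam {m : ℕ} (hm : 0 < m) (g : ℕ → (Fin m → ℝ) → ℝ)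
    (hodd : ∀ j x, g j (-x) = - g j x) (hcont : ∀ j, Continuous (g j)) :
    ∃ x : Fin m → ℝ, ∑ j, |x j| = 1 ∧ ∀ j, j + 1 < m → g j x = 0 := by
  set S : Set (Fin m → ℝ) := {x | ∑ j, |x j| = 1} with hS
  have hScl : IsClosed S := isClosed_eq (by fun_prop) continuous_const
  have hSc : IsCompact S := by
    refine Metric.isCompact_of_isClosed_isBounded hScl ?_
    refine (Metric.isBounded_closedBall (x := (0 : Fin m → ℝ)) (r := 1)).subset ?_
    intro x hx
    rw [mem_closedBall_zero_iff, pi_norm_le_iff_of_nonneg zero_le_one]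
    intro j
    have hx' : ∑ j, |x j| = 1 := hx
    rw [← hx', Real.norm_eq_abs]
    exact Finset.single_le_sum (f := fun j => |x j|) (fun j _ => abs_nonneg _) (Finset.mem_univ j)
  choose σ hσ hsgn using exists_small hm g hodd
  have hne : ∀ N, ∃ x, x ∈ σ N := by
    intro N
    obtain ⟨e, he, h1, -⟩ := hσ N
    exact List.exists_mem_of_length_pos (by omega)
  choose x hx using hne
  have hmem : ∀ N, ∀ y ∈ σ N, y ∈ S ∧ dist y (x N) ≤ (1 - 1 / (m : ℝ)) ^ N * 2 := by
    intro N y hy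
    obtain ⟨e, he, h1, h2, h3⟩ := hσ N
    exact ⟨facet_l1 e he (h2 y hy), h3 y hy _ (hx N)⟩
  obtain ⟨z, hz, φ, hφ, hlim⟩ := hSc.tendsto_subseq (fun N => (hmem N _ (hx N)).1)
  have hr : Tendsto (fun N : ℕ => (1 - 1 / (m : ℝ)) ^ (φ N) * 2) atTop (𝓝 0) := by
    have h1 : (1 : ℝ) ≤ m := by exact_mod_cast hm
    have : Tendsto (fun N : ℕ => (1 - 1 / (m : ℝ)) ^ N) atTop (𝓝 0) := by
      apply tendsto_pow_atTop_nhds_zero_of_lt_one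
      · rw [sub_nonneg, div_le_one (by positivity)]
        exact h1
      · have : 0 < 1 / (m : ℝ) := by positivity
        linarith
    simpa using (this.comp hφ.tendsto_atTop).mul_const 2
  have hlim2 : ∀ y : ℕ → (Fin m → ℝ), (∀ N, y N ∈ σ (φ N)) → Tendsto y atTop (𝓝 z) := by
    intro y hy
    refine (tendsto_iff_of_dist ?_).1 hlim
    refine squeeze_zero (fun _ => dist_nonneg) (fun N => ?_) hr
    rw [dist_comm]
    exact (hmem _ _ (hy N)).2
  refine ⟨z, hz, fun j hj => ?_⟩
  choose a ha b hb h1 h2 using fun N => hsgn (φ N) j hj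
  apply le_antisymm
  · exact le_of_tendsto (((hcont j).tendsto z).comp (hlim2 a ha)) (Eventually.of_forall h1)
  · exact ge_of_tendsto (((hcont j).tendsto z).comp (hlim2 b hb)) (Eventually.of_forall h2)

end
end TripodBU

namespace TripodBU

/-- Coordinate of the tripod map. -/
noncomputable def leg (a b c : ℝ) : ℝ := max 0 (min 1 (min (a - b) (a - c)))

lemma leg_nonneg (a b c : ℝ) : 0 ≤ leg a b c := le_max_left _ _
lemma leg_le_one (a b c : ℝ) : leg a b c ≤ 1 := max_le zero_le_one (min_le_left _ _)
lemma leg_zero_left {a b c : ℝ} (h : a ≤ b) : leg a b c = 0 := by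
  unfold leg
  apply max_eq_left
  exact (min_le_right _ _).trans ((min_le_left _ _).trans (by linarith))
lemma leg_zero_right {a b c : ℝ} (h : a ≤ c) : leg a b c = 0 := by
  unfold leg
  apply max_eq_left
  exact (min_le_right _ _).trans ((min_le_right _ _).trans (by linarith))

/-- The tripod map `ℝ² → P`. -/
noncomputable def tri (p : ℝ × ℝ) : TripodSet :=
  ⟨![leg p.1 p.2 0, leg p.2 0 p.1, leg 0 p.1 p.2], by
    refine ⟨?_, ?_⟩
    · intro i
      fin_cases i <;> exact ⟨leg_nonneg _ _ _, leg_le_one _ _ _⟩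
    · have h1 : leg p.1 p.2 0 = 0 ∨ leg p.2 0 p.1 = 0 := by
        rcases le_total p.1 p.2 with h | h
        · exact Or.inl (leg_zero_left h)
        · exact Or.inr (leg_zero_right h)
      have h2 : leg p.1 p.2 0 = 0 ∨ leg 0 p.1 p.2 = 0 := by
        rcases le_total p.1 0 with h | h
        · exact Or.inl (leg_zero_right h)
        · exact Or.inr (leg_zero_left h)
      have h3 : leg p.2 0 p.1 = 0 ∨ leg 0 p.1 p.2 = 0 := by
        rcases le_total p.2 0 with h | h
        · exact Or.inl (leg_zero_left h)
        · exact Or.inr (leg_zero_right h)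
      intro i j hij
      fin_cases i <;> fin_cases j <;> simp at hij ⊢ <;> tauto⟩

lemma continuous_tri : Continuous tri := by
  unfold tri leg
  refine Continuous.subtype_mk ?_ _
  refine continuous_pi fun i => ?_
  fin_cases i <;> simp <;> fun_prop

/-- If `a` is largest and `c` smallest with gap at least one then two legs already differ. -/
lemma leg_gap {a b c : ℝ} (h1 : b ≤ a) (h2 : c ≤ b) (h3 : 1 ≤ a - c) :
    1 ≤ |leg a b c - leg (-a) (-b) (-c)| + |leg c a b - leg (-c) (-a) (-b)| := by
  rw [leg_zero_left (a := -a) (by linarith), leg_zero_left (a := c) (by linarith)]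
  rw [sub_zero, zero_sub, abs_neg, abs_of_nonneg (leg_nonneg _ _ _),
    abs_of_nonneg (leg_nonneg _ _ _)]
  unfold leg
  rw [min_eq_left (a := a - b) (by linarith), min_eq_right (b := -c - -b) (by linarith)]
  rcases le_total 1 (a - b) with h | h
  · rw [min_eq_left h, max_eq_right zero_le_one]
    linarith [le_max_left 0 (min 1 (-c - -b))]
  · rcases le_total 1 (-c - -b) with h' | h'
    · rw [min_eq_left h', max_eq_right zero_le_one]
      linarith [le_max_left 0 (min 1 (a - b))]
    · rw [min_eq_right h, min_eq_right h']
      linarith [le_max_right 0 (a - b), le_max_right 0 (-c - -b)]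

lemma leg_swap (a b c : ℝ) : leg a b c = leg a c b := by
  unfold leg; rw [min_comm (a - b)]

lemma tri_dist (p : ℝ × ℝ) (hp : 1 ≤ |p.1| ∨ 1 ≤ |p.2|) : 1 ≤ tripodDist (tri p) (tri (-p)) := by
  obtain ⟨s, t⟩ := p
  have key : ∀ a b c : ℝ, (1 ≤ |a - b| ∨ 1 ≤ |b - c| ∨ 1 ≤ |a - c|) →
      1 ≤ |leg a b c - leg (-a) (-b) (-c)| + |leg b c a - leg (-b) (-c) (-a)|
        + |leg c a b - leg (-c) (-a) (-b)| := by
    intro a b c h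
    have n1 := abs_nonneg (leg a b c - leg (-a) (-b) (-c))
    have n2 := abs_nonneg (leg b c a - leg (-b) (-c) (-a))
    have n3 := abs_nonneg (leg c a b - leg (-c) (-a) (-b))
    have hh : 1 ≤ a - b ∨ 1 ≤ b - a ∨ 1 ≤ b - c ∨ 1 ≤ c - b ∨ 1 ≤ a - c ∨ 1 ≤ c - a := by
      rcases h with h | h | h <;> rcases le_abs.1 h with h | h <;> grind
    rcases le_total a b with h1 | h1 <;> rcases le_total b c with h2 | h2 <;>
      rcases le_total a c with h3 | h3
    · have := leg_gap h2 h1 (by grind)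
      rw [leg_swap c b a, leg_swap (-c) (-b) (-a), leg_swap a c b, leg_swap (-a) (-c) (-b)] at this
      linarith
    · have := leg_gap h2 h1 (by grind)
      rw [leg_swap c b a, leg_swap (-c) (-b) (-a), leg_swap a c b, leg_swap (-a) (-c) (-b)] at this
      linarith
    · have := leg_gap h2 h3 (by grind)
      rw [leg_swap a b c, leg_swap (-a) (-b) (-c)] at this
      rw [leg_swap a b c, leg_swap (-a) (-b) (-c)]
      linarith
    · have := leg_gap h1 h3 (by grind)
      rw [leg_swap b a c, leg_swap (-b) (-a) (-c), leg_swap c b a, leg_swap (-c) (-b) (-a)] at this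
      linarith
    · have := leg_gap h3 h1 (by grind)
      rw [leg_swap b c a, leg_swap (-b) (-c) (-a)] at this
      rw [leg_swap b c a, leg_swap (-b) (-c) (-a)]
      linarith
    · have := leg_gap h3 h2 (by grind)
      rw [leg_swap a c b, leg_swap (-a) (-c) (-b), leg_swap b a c, leg_swap (-b) (-a) (-c)] at this
      linarith
    · have := leg_gap h1 h2 (by grind)
      linarith
    · have := leg_gap h1 h2 (by grind)
      linarith
  have h := key s t 0 (by
    rcases hp with hp | hp
    · right; right; simpa using hp
    · right; left; simpa using hp)
  simp only [neg_zero] at h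
  simpa [tripodDist, Fin.sum_univ_three, tri] using h

end TripodBU

/-- **Theorem (Lindenstrauss–Tsukamoto).** For every `ε ∈ (0,1)` and every `n ≥ 1` there is no
`ε`-embedding of `(P^n, d_{l^∞})` into `ℝ^{2n-1}`, where `P` is the tripod with the graph
distance in which all three edges have length one. -/
theorem tripod_power_no_eps_embedding (ε : ℝ) (hε0 : 0 < ε) (hε1 : ε < 1)
    (n : ℕ) (hn : 0 < n) :
    ¬ ∃ f : (Fin n → ↥TripodSet) → (Fin (2 * n - 1) → ℝ),
        Continuous f ∧ ∀ x y, f x = f y → tripodDistInf x y < ε := by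
  rintro ⟨f, hf, hinj⟩
  have hn' : (0 : ℝ) < n := by exact_mod_cast hn
  let X : (Fin (2 * n) → ℝ) → (Fin n → TripodSet) := fun z i =>
    TripodBU.tri ((2 * n : ℝ) * z ⟨2 * i.val, by omega⟩,
      (2 * n : ℝ) * z ⟨2 * i.val + 1, by omega⟩)
  have hX : Continuous X := by
    refine continuous_pi fun i => ?_
    exact TripodBU.continuous_tri.comp (by fun_prop)
  let g : ℕ → (Fin (2 * n) → ℝ) → ℝ := fun j z =>
    if h : j < 2 * n - 1 then f (X z) ⟨j, h⟩ - f (X (-z)) ⟨j, h⟩ else 0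
  obtain ⟨z, hz, hg⟩ := TripodBU.borsuk_ulam (m := 2 * n) (by omega) g
    (by
      intro j x
      simp only [g]
      split_ifs
      · simp
      · simp)
    (by
      intro j
      simp only [g]
      split_ifs with h
      · have h1 : Continuous fun z => f (X z) := hf.comp hX
        have h2 : Continuous fun z => f (X (-z)) := h1.comp continuous_neg
        exact ((continuous_apply _).comp h1).sub ((continuous_apply _).comp h2)
      · exact continuous_const)
  have heq : f (X z) = f (X (-z)) := by
    funext j
    have := hg j.val (by have := j.isLt; omega)
    simp only [g, j.isLt, dif_pos] at this
    exact sub_eq_zero.1 this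
  have hlt := hinj _ _ heq
  obtain ⟨j, hj⟩ : ∃ j, 1 ≤ |(2 * n : ℝ) * z j| := by
    by_contra hcon
    push Not at hcon
    have : ∑ j : Fin (2 * n), |(2 * n : ℝ) * z j| < ∑ j : Fin (2 * n), (1 : ℝ) :=
      Finset.sum_lt_sum_of_nonempty ⟨⟨0, by omega⟩, Finset.mem_univ _⟩ (fun j _ => hcon j)
    simp_rw [abs_mul] at this
    rw [← Finset.mul_sum, hz] at this
    simp at this
  have hi : j.val / 2 < n := by have := j.isLt; omega
  set i : Fin n := ⟨j.val / 2, hi⟩ with hidef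
  have hd : 1 ≤ tripodDist (X z i) (X (-z) i) := by
    have : X (-z) i = TripodBU.tri (-((2 * n : ℝ) * z ⟨2 * i.val, by omega⟩,
      (2 * n : ℝ) * z ⟨2 * i.val + 1, by omega⟩)) := by
      simp [X]
    rw [this]
    apply TripodBU.tri_dist
    rcases Nat.mod_two_eq_zero_or_one j.val with h | h
    · left
      have e : (⟨2 * i.val, by omega⟩ : Fin (2 * n)) = j := Fin.ext (by simp [hidef]; omega)
      simpa only [e] using hj
    · right
      have e : (⟨2 * i.val + 1, by omega⟩ : Fin (2 * n)) = j := Fin.ext (by simp [hidef]; omega)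
      simpa only [e] using hj
  have hle : tripodDist (X z i) (X (-z) i) ≤ tripodDistInf (X z) (X (-z)) :=
    le_csSup (Set.finite_range _).bddAbove ⟨i, rfl⟩
  linarith
end
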